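/- arXiv:1109.4937 — 6 statements merged into one kernel-verified Lean document; each statement's English description precedes it below -/
import Mathlib

section
/- Let L > 0, T > 0 and let q : [0,L] × [0,T] → ℂ be twice continuously differentiable and satisfy the linear Schrödinger equation i q_t + q_{xx} = 0 on (0,L) × (0,T). Then for every k ∈ ℂ: ∫₀^L e^{−ikx} q(x,0) dx + k∫₀^T e^{ik²s} q(0,s) ds − i∫₀^T e^{ik²s} q_x(0,s) ds − e^{−ikL} ( k∫₀^T e^{ik²s} q(L,s) ds − i∫₀^T e^{ik²s} q_x(L,s) ds ) = e^{ik²T} ∫₀^L e^{−ikx} q(x,T) dx. -/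
/-!
With `E = exp (-ikx)` and `W = exp (ik²t)`, the equation `q_t = i q_xx` is equivalent to the
divergence form `∂_t (E W q) = ∂_x (E W (i q_x - k q))`. Integrating over the rectangle
`[0,L] × [0,T]`, exchanging the order of integration (Fubini) and applying the fundamental theorem
of calculus in each variable gives the global relation; `swap_of_hasDerivAt` isolates this
rectangle argument, a Green identity that needs only one-variable derivatives.
-/

open Set

/-- Green's identity on a rectangle: if `∂_t F = H = ∂_x G` in the open rectangle, with `H`
jointly continuous and `F`, `G` continuous in `t`, `x` up to the boundary, then the flux of `F`
through the horizontal sides equals that of `G` through the vertical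
ones. -/
theorem swap_of_hasDerivAt {L T : ℝ} (hL : 0 ≤ L) (hT : 0 ≤ T) (F G H : ℝ → ℝ → ℂ)
    (hFc : ∀ x ∈ Icc (0:ℝ) L, ContinuousOn (fun t => F x t) (Icc 0 T))
    (hGc : ∀ t ∈ Icc (0:ℝ) T, ContinuousOn (fun x => G x t) (Icc 0 L))
    (hH : ContinuousOn (fun p : ℝ × ℝ => H p.1 p.2) (Icc 0 L ×ˢ Icc 0 T))
    (hF : ∀ x ∈ Ioo (0:ℝ) L, ∀ t ∈ Ioo (0:ℝ) T, HasDerivAt (fun t' => F x t') (H x t) t)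
    (hG : ∀ x ∈ Ioo (0:ℝ) L, ∀ t ∈ Ioo (0:ℝ) T, HasDerivAt (fun x' => G x' t) (H x t) x) :
    ∫ x in (0:ℝ)..L, (F x T - F x 0) = ∫ t in (0:ℝ)..T, (G L t - G 0 t) := by
  have hswap : ∫ x in (0:ℝ)..L, ∫ t in (0:ℝ)..T, H x t
      = ∫ t in (0:ℝ)..T, ∫ x in (0:ℝ)..L, H x t := by
    apply MeasureTheory.intervalIntegral_intervalIntegral_swap
    rw [uIoc_of_le hL, uIoc_of_le hT]
    exact (hH.integrableOn_compact (isCompact_Icc.prod isCompact_Icc)).mono_set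
      (prod_mono Ioc_subset_Icc_self Ioc_subset_Icc_self)
  have hx : ∫ x in (0:ℝ)..L, ∫ t in (0:ℝ)..T, H x t = ∫ x in (0:ℝ)..L, (F x T - F x 0) := by
    refine intervalIntegral.integral_congr_Ioo_of_le hL fun x hx => ?_
    have hx' := Ioo_subset_Icc_self hx
    refine intervalIntegral.integral_eq_sub_of_hasDerivAt_of_le hT (hFc x hx') (hF x hx) ?_
    apply ContinuousOn.intervalIntegrable_of_Icc hT
    exact hH.comp (f := fun t => (x, t)) (by fun_prop) fun t ht => ⟨hx', ht⟩
  have ht : ∫ t in (0:ℝ)..T, ∫ x in (0:ℝ)..L, H x t = ∫ t in (0:ℝ)..T, (G L t - G 0 t) := by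
    refine intervalIntegral.integral_congr_Ioo_of_le hT fun t ht => ?_
    have ht' := Ioo_subset_Icc_self ht
    refine intervalIntegral.integral_eq_sub_of_hasDerivAt_of_le hL (hGc t ht')
      (fun x hx => hG x hx t ht) ?_
    apply ContinuousOn.intervalIntegrable_of_Icc hL
    exact hH.comp (f := fun x => (x, t)) (by fun_prop) fun x hx => ⟨hx, ht'⟩
  rw [← hx, hswap, ht]

/-- The global relation for the linear Schrödinger equation `i q_t + q_xx = 0` on `[0,L]`:
for every `k ∈ ℂ`,
`∫₀^L e^{-ikx} q(x,0) dx + k ∫₀^T e^{ik²s} q(0,s) ds - i ∫₀^T e^{ik²s} q_x(0,s) ds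
 - e^{-ikL} (k ∫₀^T e^{ik²s} q(L,s) ds - i ∫₀^T e^{ik²s} q_x(L,s) ds)
 = e^{ik²T} ∫₀^L e^{-ikx} q(x,T) dx`. -/
theorem stmt_1 (L T : ℝ) (hL : 0 < L) (hT : 0 < T)
    (q qx qt qxx : ℝ → ℝ → ℂ)
    (hqx : ∀ x ∈ Icc (0:ℝ) L, ∀ t ∈ Icc (0:ℝ) T,
      HasDerivWithinAt (fun x' => q x' t) (qx x t) (Icc 0 L) x)
    (hqxx : ∀ x ∈ Icc (0:ℝ) L, ∀ t ∈ Icc (0:ℝ) T,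
      HasDerivWithinAt (fun x' => qx x' t) (qxx x t) (Icc 0 L) x)
    (hqt : ∀ x ∈ Icc (0:ℝ) L, ∀ t ∈ Icc (0:ℝ) T,
      HasDerivWithinAt (fun t' => q x t') (qt x t) (Icc 0 T) t)
    (hq_cont : ContinuousOn (fun p : ℝ × ℝ => q p.1 p.2) (Icc 0 L ×ˢ Icc 0 T))
    (hqx_cont : ContinuousOn (fun p : ℝ × ℝ => qx p.1 p.2) (Icc 0 L ×ˢ Icc 0 T))
    (hqt_cont : ContinuousOn (fun p : ℝ × ℝ => qt p.1 p.2) (Icc 0 L ×ˢ Icc 0 T))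
    (hqxx_cont : ContinuousOn (fun p : ℝ × ℝ => qxx p.1 p.2) (Icc 0 L ×ˢ Icc 0 T))
    (hpde : ∀ x ∈ Ioo (0:ℝ) L, ∀ t ∈ Ioo (0:ℝ) T,
      Complex.I * qt x t + qxx x t = 0) :
    ∀ k : ℂ,
      (∫ x in (0:ℝ)..L, Complex.exp (-(Complex.I * k * (x:ℂ))) * q x 0)
        + k * (∫ s in (0:ℝ)..T, Complex.exp (Complex.I * k ^ 2 * (s:ℂ)) * q 0 s)
        - Complex.I * (∫ s in (0:ℝ)..T, Complex.exp (Complex.I * k ^ 2 * (s:ℂ)) * qx 0 s)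
        - Complex.exp (-(Complex.I * k * (L:ℂ))) *
            (k * (∫ s in (0:ℝ)..T, Complex.exp (Complex.I * k ^ 2 * (s:ℂ)) * q L s)
              - Complex.I * (∫ s in (0:ℝ)..T, Complex.exp (Complex.I * k ^ 2 * (s:ℂ)) * qx L s))
      = Complex.exp (Complex.I * k ^ 2 * (T:ℂ)) *
          ∫ x in (0:ℝ)..L, Complex.exp (-(Complex.I * k * (x:ℂ))) * q x T := by
  intro k
  have h0L : (0:ℝ) ∈ Icc (0:ℝ) L := ⟨le_rfl, hL.le⟩
  have hLL : L ∈ Icc (0:ℝ) L := ⟨hL.le, le_rfl⟩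
  have h0T : (0:ℝ) ∈ Icc (0:ℝ) T := ⟨le_rfl, hT.le⟩
  have hTT : T ∈ Icc (0:ℝ) T := ⟨hT.le, le_rfl⟩
  set E : ℝ → ℂ := fun x => Complex.exp (-(Complex.I * k * (x:ℂ))) with hE
  set W : ℝ → ℂ := fun s => Complex.exp (Complex.I * k ^ 2 * (s:ℂ)) with hW
  have hEc : Continuous E := by fun_prop
  have hWc : Continuous W := by fun_prop
  have hEd : ∀ x, HasDerivAt E (-(Complex.I * k) * E x) x := by
    intro x
    have h := (((hasDerivAt_id x).ofReal_comp).const_mul (Complex.I * k)).neg.cexp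
    exact h.congr_deriv (by simp [hE, mul_comm])
  have hWd : ∀ s, HasDerivAt W (Complex.I * k ^ 2 * W s) s := by
    intro s
    have h := (((hasDerivAt_id s).ofReal_comp).const_mul (Complex.I * k ^ 2)).cexp
    exact h.congr_deriv (by simp [hW, mul_comm])
  have rowc : ∀ f : ℝ → ℝ → ℂ,
      ContinuousOn (fun p : ℝ × ℝ => f p.1 p.2) (Icc 0 L ×ˢ Icc 0 T) →
      ∀ t ∈ Icc (0:ℝ) T, ContinuousOn (fun x => f x t) (Icc 0 L) := fun f hf t ht =>
    hf.comp (f := fun x => (x, t)) (by fun_prop) fun x hx => ⟨hx, ht⟩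
  have colc : ∀ f : ℝ → ℝ → ℂ,
      ContinuousOn (fun p : ℝ × ℝ => f p.1 p.2) (Icc 0 L ×ˢ Icc 0 T) →
      ∀ x ∈ Icc (0:ℝ) L, ContinuousOn (fun t => f x t) (Icc 0 T) := fun f hf x hx =>
    hf.comp (f := fun t => (x, t)) (by fun_prop) fun t ht => ⟨hx, ht⟩
  have key := swap_of_hasDerivAt hL.le hT.le
    (fun x t => W t * (E x * q x t))
    (fun x t => E x * (Complex.I * (W t * qx x t) - k * (W t * q x t)))
    (fun x t => E x * W t * (Complex.I * k ^ 2 * q x t + qt x t))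
    (fun x hx => by have := colc q hq_cont x hx; fun_prop)
    (fun t ht => by
      have h1 := rowc q hq_cont t ht
      have h2 := rowc qx hqx_cont t ht
      fun_prop)
    (by fun_prop)
    (fun x hx t ht => by
      have h := (hqt x (Ioo_subset_Icc_self hx) t (Ioo_subset_Icc_self ht)).hasDerivAt
        (Icc_mem_nhds ht.1 ht.2)
      exact ((hWd t).mul (h.const_mul (E x))).congr_deriv (by ring))
    (fun x hx t ht => by
      have hx' := Ioo_subset_Icc_self hx
      have ht' := Ioo_subset_Icc_self ht
      have h1 := (hqx x hx' t ht').hasDerivAt (Icc_mem_nhds hx.1 hx.2)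
      have h2 := (hqxx x hx' t ht').hasDerivAt (Icc_mem_nhds hx.1 hx.2)
      refine ((hEd x).mul (((h2.const_mul (W t)).const_mul Complex.I).sub
        ((h1.const_mul (W t)).const_mul k))).congr_deriv ?_
      simp only [Pi.sub_apply]
      -- The two sides differ by `E W` times a multiple of the equation and of `I ^ 2 = -1`.
      linear_combination (Complex.I * E x * W t) * hpde x hx t ht
        - (E x * W t * (qt x t + k * qx x t)) * Complex.I_sq)
  have iE : ∀ t ∈ Icc (0:ℝ) T,
      IntervalIntegrable (fun x => E x * q x t) MeasureTheory.volume 0 L := fun t ht =>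
    ContinuousOn.intervalIntegrable_of_Icc hL.le (hEc.continuousOn.mul (rowc q hq_cont t ht))
  have iW : ∀ f : ℝ → ℝ → ℂ,
      ContinuousOn (fun p : ℝ × ℝ => f p.1 p.2) (Icc 0 L ×ˢ Icc 0 T) →
      ∀ x ∈ Icc (0:ℝ) L,
        IntervalIntegrable (fun s => W s * f x s) MeasureTheory.volume 0 T := fun f hf x hx =>
    ContinuousOn.intervalIntegrable_of_Icc hT.le (hWc.continuousOn.mul (colc f hf x hx))
  have iG : ∀ x ∈ Icc (0:ℝ) L, IntervalIntegrable
      (fun s => E x * (Complex.I * (W s * qx x s) - k * (W s * q x s)))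
      MeasureTheory.volume 0 T := fun x hx =>
    (((iW qx hqx_cont x hx).const_mul _).sub ((iW q hq_cont x hx).const_mul _)).const_mul _
  have vG : ∀ x ∈ Icc (0:ℝ) L,
      ∫ s in (0:ℝ)..T, E x * (Complex.I * (W s * qx x s) - k * (W s * q x s))
        = E x * (Complex.I * (∫ s in (0:ℝ)..T, W s * qx x s)
          - k * ∫ s in (0:ℝ)..T, W s * q x s) := fun x hx => by
    rw [intervalIntegral.integral_const_mul, intervalIntegral.integral_sub
      ((iW qx hqx_cont x hx).const_mul _) ((iW q hq_cont x hx).const_mul _),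
      intervalIntegral.integral_const_mul, intervalIntegral.integral_const_mul]
  rw [intervalIntegral.integral_sub ((iE T hTT).const_mul _) ((iE 0 h0T).const_mul _),
    intervalIntegral.integral_sub (iG L hLL) (iG 0 h0L), vG L hLL, vG 0 h0L,
    intervalIntegral.integral_const_mul, intervalIntegral.integral_const_mul] at key
  have hE0 : E 0 = 1 := by simp [hE]
  have hW0 : W 0 = 1 := by simp [hW]
  rw [hE0, hW0] at key
  change (∫ x in (0:ℝ)..L, E x * q x 0) + k * (∫ s in (0:ℝ)..T, W s * q 0 s)
      - Complex.I * (∫ s in (0:ℝ)..T, W s * qx 0 s)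
      - E L * (k * (∫ s in (0:ℝ)..T, W s * q L s)
        - Complex.I * (∫ s in (0:ℝ)..T, W s * qx L s))
    = W T * ∫ x in (0:ℝ)..L, E x * q x T
  linear_combination -key
end

section
/- Let t > 0 and 0 < t′ < t, and let f : [−t, t] → ℂ be continuously differentiable. Define f̂(k) = ∫_{−t}^{t} e^{2ik²(s−t)} f(s) ds for k ∈ ℂ. Then the limit lim_{R→∞} ( ∫₀^R x e^{4ix²(t−t′)} f̂(x) dx + ∫₀^R y e^{−4iy²(t−t′)} f̂(iy) dy ) exists and equals (π/2) f(2t′ − t). -/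
/-!
Put `c = 2t' - t ∈ (-t, t)`, let `F(s) = f(s + c)` on `(-t - c, t - c]` and `F = 0` elsewhere, and
let `E_F(ω) = ∫ e^{iωs} F(s) ds` be its Fourier transform. The two integrands are `x E_F(2x²)` and
`y E_F(-2y²)`, so the substitution `ω = ±2x²` turns the sum into `¼ ∫_{-N}^{N} E_F(ω) dω` with
`N = 2R²`. The statement is thus pointwise Fourier inversion
`∫_{-N}^{N} E_F → 2π F(0)` (`tendsto_integral_fourierExp`) for an integrable `F` that is
differentiable at `0`.

To prove it, subtract `F(0) e^{-s²/2}`, for which the claim is an explicit Gaussian computation.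
What remains vanishes at `0` and is differentiable there, hence equals `s G(s)` with `G`
integrable. By Fubini, `∫_{-N}^{N} E_{sG} = -i (E_G(N) - E_G(-N))`, which tends to `0` by the
Riemann–Lebesgue lemma.
-/

open Set Filter Topology

/-- The transform `f̂(k) = ∫_{-t}^{t} e^{2ik²(s-t)} f(s) ds`. -/
noncomputable def fhat (t : ℝ) (f : ℝ → ℂ) (k : ℂ) : ℂ :=
  ∫ s in (-t)..t, Complex.exp (2 * Complex.I * k ^ 2 * ((s:ℂ) - (t:ℂ))) * f s

open MeasureTheory

/-- The Fourier transform of `F : ℝ → ℂ`, normalised as `ω ↦ ∫ e^{iωs} F(s) ds`. -/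
noncomputable def fourierExp (F : ℝ → ℂ) (ω : ℝ) : ℂ :=
  ∫ s : ℝ, Complex.exp (Complex.I * ω * s) * F s

lemma norm_exp_I_mul_mul (ω s : ℝ) : ‖Complex.exp (Complex.I * ω * s)‖ = 1 := by
  have : Complex.I * ω * s = ((ω * s : ℝ) : ℂ) * Complex.I := by push_cast; ring
  rw [this, Complex.norm_exp_ofReal_mul_I]

lemma integrable_exp_mul {F : ℝ → ℂ} (hF : Integrable F) (ω : ℝ) :
    Integrable (fun s : ℝ => Complex.exp (Complex.I * ω * s) * F s) := by
  refine hF.bdd_mul (c := 1) (by fun_prop) ?_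
  exact Eventually.of_forall fun s => (norm_exp_I_mul_mul ω s).le

lemma continuous_fourierExp {F : ℝ → ℂ} (hF : Integrable F) : Continuous (fourierExp F) := by
  unfold fourierExp
  refine continuous_of_dominated (bound := fun s => ‖F s‖) ?_ ?_ hF.norm ?_
  · exact fun ω => (integrable_exp_mul hF ω).aestronglyMeasurable
  · intro ω
    exact Eventually.of_forall fun s => by rw [norm_mul, norm_exp_I_mul_mul, one_mul]
  · exact Eventually.of_forall fun s => by fun_prop

/-- The Riemann–Lebesgue lemma in the normalisation of `fourierExp`. -/
lemma tendsto_fourierExp_cocompact (G : ℝ → ℂ) :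
    Tendsto (fourierExp G) (cocompact ℝ) (𝓝 0) := by
  have h := Real.tendsto_integral_exp_smul_cocompact G
  have hpi : (-(2 * Real.pi))⁻¹ ≠ 0 := inv_ne_zero (neg_ne_zero.2 Real.two_pi_pos.ne')
  have hm : Tendsto (fun ω : ℝ => (-(2 * Real.pi))⁻¹ * ω) (cocompact ℝ) (cocompact ℝ) :=
    (Homeomorph.mulLeft₀ _ hpi).isClosedEmbedding.tendsto_cocompact
  refine (h.comp hm).congr fun ω => ?_
  simp only [Function.comp, fourierExp]
  refine integral_congr_ae (Eventually.of_forall fun s => ?_)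
  simp only [Circle.smul_def, Real.fourierChar_apply, smul_eq_mul]
  congr 2
  have : (Real.pi : ℂ) ≠ 0 := by exact_mod_cast Real.pi_ne_zero
  push_cast
  field_simp

lemma integral_fourierExp {F : ℝ → ℂ} (hF : Integrable F) (a b : ℝ) :
    ∫ ω in a..b, fourierExp F ω =
      ∫ s : ℝ, (∫ ω in a..b, Complex.exp (Complex.I * ω * s)) * F s := by
  unfold fourierExp
  rw [intervalIntegral_integral_swap]
  · simp_rw [intervalIntegral.integral_mul_const]
  · have h1 : Integrable (fun _ : ℝ => (1 : ℂ)) (volume.restrict (uIoc a b)) :=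
      integrableOn_const (by simp [uIoc])
    have h2 := h1.mul_prod hF
    refine (h2.bdd_mul (c := 1)
      (f := fun p : ℝ × ℝ => Complex.exp (Complex.I * p.1 * p.2)) ?_ ?_).congr ?_
    · exact Continuous.aestronglyMeasurable (by fun_prop)
    · exact Eventually.of_forall fun p => (norm_exp_I_mul_mul p.1 p.2).le
    · exact Eventually.of_forall fun p => by simp [Function.uncurry]

/-- The truncated inversion integral of `s ↦ s G(s)` involves only two values of the Fourier
transform of `G`, since `∫_{-N}^{N} s e^{iωs} dω = -i (e^{iNs} - e^{-iNs})`. -/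
lemma integral_fourierExp_mul {G : ℝ → ℂ} (hG : Integrable G)
    (hF : Integrable (fun s : ℝ => (s : ℂ) * G s)) (N : ℝ) :
    ∫ ω in (-N)..N, fourierExp (fun s : ℝ => (s : ℂ) * G s) ω =
      -Complex.I * (fourierExp G N - fourierExp G (-N)) := by
  rw [integral_fourierExp hF]
  unfold fourierExp
  rw [← integral_sub (integrable_exp_mul hG _) (integrable_exp_mul hG _), ← integral_const_mul]
  refine integral_congr_ae (Eventually.of_forall fun s => ?_)
  have hI := Complex.I_ne_zero
  by_cases hs : (s : ℂ) = 0
  · simp [hs]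
  have : ∫ ω in (-N)..N, Complex.exp (Complex.I * ω * s) =
      (Complex.exp (Complex.I * N * s) - Complex.exp (Complex.I * (-N : ℝ) * s))
        / (Complex.I * s) := by
    have := integral_exp_mul_complex (a := -N) (b := N) (mul_ne_zero hI hs)
    simpa only [mul_right_comm] using this
  simp only [this]
  field_simp
  simp only [Complex.I_sq]
  ring

lemma tendsto_integral_fourierExp_mul {G : ℝ → ℂ} (hG : Integrable G)
    (hF : Integrable (fun s : ℝ => (s : ℂ) * G s)) :
    Tendsto (fun N : ℝ => ∫ ω in (-N)..N, fourierExp (fun s : ℝ => (s : ℂ) * G s) ω)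
      atTop (𝓝 0) := by
  simp_rw [integral_fourierExp_mul hG hF]
  have h := tendsto_fourierExp_cocompact G
  have h1 := h.mono_left atTop_le_cocompact
  have h2 := (h.mono_left atBot_le_cocompact).comp tendsto_neg_atTop_atBot
  simpa using (h1.sub h2).const_mul (-Complex.I)

/-- The Gaussian `s ↦ e^{-s²/2}`. -/
noncomputable def gauss (s : ℝ) : ℂ := Complex.exp (-(1 / 2 : ℂ) * (s : ℂ) ^ 2)

lemma integrable_gauss : Integrable gauss :=
  integrable_cexp_neg_mul_sq (by norm_num)

lemma fourierExp_gauss (ω : ℝ) :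
    fourierExp gauss ω = (Real.pi / (1 / 2 : ℂ)) ^ (1 / 2 : ℂ) * gauss ω := by
  have h := fourierIntegral_gaussian (b := 1 / 2) (by norm_num) (ω : ℂ)
  unfold fourierExp gauss
  rw [h]
  congr 2
  ring

lemma tendsto_integral_fourierExp_gauss :
    Tendsto (fun N : ℝ => ∫ ω in (-N)..N, fourierExp gauss ω) atTop (𝓝 (2 * Real.pi)) := by
  have hi : Integrable (fourierExp gauss) := by
    rw [funext fourierExp_gauss]
    exact integrable_gauss.const_mul _
  have h := intervalIntegral_tendsto_integral hi tendsto_neg_atTop_atBot tendsto_id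
  convert! h using 2
  simp_rw [fourierExp_gauss, integral_const_mul]
  unfold gauss
  rw [integral_gaussian_complex (by norm_num), ← Complex.cpow_add]
  · norm_num
    ring
  · simp [Real.pi_ne_zero]

lemma integrable_div_of_differentiableAt {H : ℝ → ℂ} (hH : Integrable H) (h0 : H 0 = 0)
    (hd : DifferentiableAt ℝ H 0) : Integrable (fun s : ℝ => H s / s) := by
  have hO : (fun s : ℝ => H s) =O[𝓝 0] fun s : ℝ => s := by
    simpa [h0] using hd.isBigO_sub
  obtain ⟨C, hC⟩ := hO.bound
  obtain ⟨δ, hδ, hball⟩ := Metric.eventually_nhds_iff.1 hC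
  have hint : Integrable (fun s : ℝ =>
      (Ioo (-δ) δ).indicator (fun _ => |C|) s + δ⁻¹ * ‖H s‖) := by
    refine Integrable.add ?_ (hH.norm.const_mul _)
    exact (integrable_indicator_iff measurableSet_Ioo).2 (by simp)
  refine hint.mono' (hH.aestronglyMeasurable.div₀ (by fun_prop)) (Eventually.of_forall fun s => ?_)
  rw [norm_div, Complex.norm_real]
  by_cases hs : s ∈ Ioo (-δ) δ
  · rw [indicator_of_mem hs]
    have h1 : ‖H s‖ / ‖s‖ ≤ |C| := by
      refine div_le_of_le_mul₀ (norm_nonneg _) (abs_nonneg _) ?_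
      refine (hball ?_).trans (by gcongr; exact le_abs_self C)
      simpa [abs_lt] using hs
    have h2 : 0 ≤ δ⁻¹ * ‖H s‖ := by positivity
    linarith
  · rw [indicator_of_notMem hs, zero_add, div_eq_inv_mul]
    have : δ ≤ ‖s‖ := by
      by_contra! h
      exact hs (by simpa [abs_lt] using h)
    gcongr

/-- Pointwise Fourier inversion at a point of differentiability. -/
lemma tendsto_integral_fourierExp {F : ℝ → ℂ} (hF : Integrable F)
    (hd : DifferentiableAt ℝ F 0) :
    Tendsto (fun N : ℝ => ∫ ω in (-N)..N, fourierExp F ω) atTop (𝓝 (2 * Real.pi * F 0)) := by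
  set H : ℝ → ℂ := fun s => F s - F 0 * gauss s with hHdef
  have hH : Integrable H := hF.sub (integrable_gauss.const_mul _)
  have hH0 : H 0 = 0 := by simp [H, gauss]
  have hdg : DifferentiableAt ℝ gauss 0 := by
    unfold gauss
    have : DifferentiableAt ℝ (fun s : ℝ => (s : ℂ)) 0 := Complex.ofRealCLM.differentiableAt
    fun_prop
  have hHd : DifferentiableAt ℝ H 0 := hd.sub (hdg.const_mul _)
  have hG := integrable_div_of_differentiableAt hH hH0 hHd
  have hHG : (fun s : ℝ => (s : ℂ) * (H s / s)) = H := by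
    funext s
    by_cases hs : s = 0
    · simp [hs, hH0]
    · have : (s : ℂ) ≠ 0 := by exact_mod_cast hs
      field_simp
  have h1 := tendsto_integral_fourierExp_mul hG (by rwa [hHG])
  rw [hHG] at h1
  have h2 := h1.add (tendsto_integral_fourierExp_gauss.const_mul (F 0))
  rw [zero_add, mul_comm] at h2
  refine h2.congr fun N => ?_
  rw [← intervalIntegral.integral_const_mul, ← intervalIntegral.integral_add]
  · refine intervalIntegral.integral_congr fun ω _ => ?_
    simp only [fourierExp]
    rw [← integral_const_mul, ← integral_add (integrable_exp_mul hH ω)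
      ((integrable_exp_mul integrable_gauss ω).const_mul _)]
    refine integral_congr_ae (Eventually.of_forall fun s => ?_)
    simp only [hHdef]
    ring
  · exact (continuous_fourierExp hH).intervalIntegrable _ _
  · exact ((continuous_fourierExp integrable_gauss).const_mul _).intervalIntegrable _ _

/-- The substitution `ω = a x²`. -/
lemma integral_mul_comp_sq {E : ℝ → ℂ} (hE : Continuous E) (a R : ℝ) :
    2 * a * ∫ x in (0 : ℝ)..R, (x : ℂ) * E (a * x ^ 2) = ∫ ω in (0 : ℝ)..(a * R ^ 2), E ω := by
  have h := intervalIntegral.integral_deriv_smul_comp (a := 0) (b := R)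
    (f := fun x : ℝ => a * x ^ 2) (f' := fun x : ℝ => a * (2 * x)) (g := E)
    (fun x _ => by simpa using (hasDerivAt_pow 2 x).const_mul a)
    (by fun_prop) hE
  simp only [ne_eq, OfNat.ofNat_ne_zero, not_false_eq_true, zero_pow, mul_zero] at h
  rw [← h, ← intervalIntegral.integral_const_mul]
  refine intervalIntegral.integral_congr fun x _ => ?_
  simp only [Function.comp, Complex.real_smul]
  push_cast
  ring

/-- `f(· + c)` restricted to the translated interval, extended by zero. -/
noncomputable def shiftCut (t c : ℝ) (f : ℝ → ℂ) : ℝ → ℂ :=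
  (Ioc (-t - c) (t - c)).indicator fun s => f (s + c)

/-- With `c = 2t' - t`, the factor `e^{4ik²(t-t')}` recentres the phase of `f̂` at `c`. -/
lemma exp_mul_fhat {t : ℝ} (t' : ℝ) (ht : 0 < t) (f : ℝ → ℂ) (k : ℂ) (ω : ℝ)
    (hk : 2 * k ^ 2 = ω) :
    Complex.exp (4 * Complex.I * k ^ 2 * ((t : ℂ) - (t' : ℂ))) * fhat t f k =
      fourierExp (shiftCut t (2 * t' - t) f) ω := by
  set c := 2 * t' - t with hc
  have hR : fourierExp (shiftCut t c f) ω =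
      ∫ s in (-t - c)..(t - c), Complex.exp (Complex.I * ω * s) * f (s + c) := by
    rw [intervalIntegral.integral_of_le (by linarith), ← integral_indicator measurableSet_Ioc]
    unfold fourierExp shiftCut
    refine integral_congr_ae (Eventually.of_forall fun s => ?_)
    by_cases hs : s ∈ Ioc (-t - c) (t - c) <;> simp [hs]
  have hS := intervalIntegral.integral_comp_sub_right (a := -t) (b := t)
    (fun s : ℝ => Complex.exp (Complex.I * ω * s) * f (s + c)) c
  rw [hR, ← hS, fhat, ← intervalIntegral.integral_const_mul]
  refine intervalIntegral.integral_congr fun s _ => ?_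
  simp only [sub_add_cancel]
  rw [← mul_assoc, ← Complex.exp_add, ← hk, hc]
  congr 2
  push_cast
  ring

/-- The inversion identity: for `0 < t' < t` and `f` continuously differentiable on `[-t,t]`,
the integral of `k e^{4ik²(t-t')} f̂(k)` along the boundary of the first quadrant, taken as an
improper limit, exists and equals `(π/2) f(2t' - t)`. -/
theorem stmt_4 (t t' : ℝ) (ht : 0 < t) (ht'0 : 0 < t') (ht't : t' < t)
    (f : ℝ → ℂ) (hf : ContDiffOn ℝ 1 f (Icc (-t) t)) :
    Tendsto
      (fun R : ℝ =>
        (∫ x in (0:ℝ)..R,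
            (x:ℂ) * Complex.exp (4 * Complex.I * (x:ℂ) ^ 2 * ((t:ℂ) - (t':ℂ))) * fhat t f (x:ℂ))
          + ∫ y in (0:ℝ)..R,
              (y:ℂ) * Complex.exp (-(4 * Complex.I * (y:ℂ) ^ 2 * ((t:ℂ) - (t':ℂ)))) *
                fhat t f (Complex.I * (y:ℂ)))
      atTop (𝓝 (((Real.pi : ℂ) / 2) * f (2 * t' - t))) := by
  set c := 2 * t' - t with hc
  set F := shiftCut t c f with hFdef
  have hF : Integrable F := by
    refine (integrable_indicator_iff measurableSet_Ioc).2 (IntegrableOn.mono_set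
      (ContinuousOn.integrableOn_Icc ?_) Ioc_subset_Icc_self)
    refine hf.continuousOn.comp (by fun_prop) fun s hs => ?_
    constructor <;> linarith [hs.1, hs.2]
  have hFeq : F =ᶠ[𝓝 0] fun s => f (s + c) := by
    have hm : Ioc (-t - c) (t - c) ∈ 𝓝 (0 : ℝ) :=
      Ioc_mem_nhds (by linarith) (by linarith)
    filter_upwards [hm] with s hs
    exact indicator_of_mem hs _
  have hd : DifferentiableAt ℝ F 0 := by
    refine DifferentiableAt.congr_of_eventuallyEq ?_ hFeq
    have hfc : DifferentiableAt ℝ f (0 + c) := by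
      rw [zero_add]
      exact (hf.differentiableOn one_ne_zero).differentiableAt
        (Icc_mem_nhds (by linarith) (by linarith))
    exact differentiableAt_comp_add_const.2 hfc
  have hE := continuous_fourierExp hF
  have hlim := tendsto_integral_fourierExp hF hd
  rw [hFeq.eq_of_nhds, zero_add] at hlim
  have hsq : Tendsto (fun R : ℝ => 2 * R ^ 2) atTop atTop :=
    (tendsto_pow_atTop two_ne_zero).const_mul_atTop two_pos
  have h4 := (hlim.comp hsq).const_mul (1 / 4 : ℂ)
  have hval : (1 / 4 : ℂ) * (2 * Real.pi * f c) = (Real.pi : ℂ) / 2 * f c := by ring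
  rw [hval] at h4
  refine h4.congr fun R => ?_
  have hx : ∀ x : ℝ, (x : ℂ) * Complex.exp (4 * Complex.I * (x:ℂ) ^ 2 * ((t:ℂ) - (t':ℂ))) *
      fhat t f (x:ℂ) = (x : ℂ) * fourierExp F (2 * x ^ 2) := by
    intro x
    rw [mul_assoc, exp_mul_fhat t' ht f x (2 * x ^ 2) (by push_cast; ring)]
  have hy : ∀ y : ℝ, (y : ℂ) * Complex.exp (-(4 * Complex.I * (y:ℂ) ^ 2 * ((t:ℂ) - (t':ℂ)))) *
      fhat t f (Complex.I * y) = (y : ℂ) * fourierExp F (-2 * y ^ 2) := by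
    intro y
    have hIy : (Complex.I * (y : ℂ)) ^ 2 = -(y : ℂ) ^ 2 := by
      rw [mul_pow, Complex.I_sq]; ring
    rw [mul_assoc, ← exp_mul_fhat t' ht f (Complex.I * y) (-2 * y ^ 2)
      (by rw [hIy]; push_cast; ring), hIy]
    congr 3
    ring
  simp_rw [hx, hy]
  have h1 := integral_mul_comp_sq hE 2 R
  have h2 := integral_mul_comp_sq hE (-2) R
  have h3 := intervalIntegral.integral_add_adjacent_intervals (μ := volume)
    (hE.intervalIntegrable (-(2 * R ^ 2)) 0) (hE.intervalIntegrable 0 (2 * R ^ 2))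
  rw [intervalIntegral.integral_symm] at h3
  rw [neg_mul] at h2
  simp only [Function.comp]
  rw [← h3, ← h1, ← h2]
  push_cast
  ring
end

section
/- Let t > 0 and let f : [−t, t] → ℂ be continuously differentiable. Define f̂(k) = ∫_{−t}^{t} e^{2ik²(s−t)} f(s) ds for k ∈ ℂ. Then the limit lim_{R→∞} ( ∫₀^R x f̂(x) dx + ∫₀^R y f̂(iy) dy ) exists and equals (π/4) f(t). -/
/-!
On the two legs `k² = x²` and `k² = -y²`, so exchanging the order of integration turns the
truncated contour integral into `∫_{-t}^{t} f(s) R² sinc(2R²(t-s)) ds` (`contour_eq`).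
Integrating by parts against the sine integral `Si(x) = ∫₀ˣ sinc` (`sinc_integral_eq`) gives
`f(-t) Si(4R²t)/2 + ½ ∫ f'(s) Si(2R²(t-s)) ds`. Since `Si` is bounded on `[0, ∞)` and tends to
`π/2`, dominated convergence yields the limit `(π/4) (f(-t) + ∫ f') = (π/4) f(t)`.

The Dirichlet integral `Si(x) → π/2` (`tendsto_sinInt`) comes from the identity
`Si(x) = π/2 - ∫₀^∞ e^{-xu} (cos x + u sin x) / (1 + u²) du` for `x > 0` (`sinInt_eq`): the two
sides have the same derivative and the same limit at `0⁺`. The integrand is dominated by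
`2 / (1 + u²)` uniformly in `x > 0`, which gives both limits and the bound on `Si`.
-/

open Set Filter Topology

open MeasureTheory

/-- The Laplace-type integrand whose `u`-integral over `(0, ∞)` is `π/2 - ∫₀ˣ sinc` for `x > 0`. -/
noncomputable def auxKernel (x u : ℝ) : ℝ :=
  Real.exp (-x * u) * (Real.cos x + u * Real.sin x) * (1 + u ^ 2)⁻¹

/-- The auxiliary function `π/2 - Si(x)` (`x > 0`), in its absolutely convergent form. -/
noncomputable def auxInt (x : ℝ) : ℝ := ∫ u in Ioi (0:ℝ), auxKernel x u

lemma continuous_auxKernel (x : ℝ) : Continuous (auxKernel x) := by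
  unfold auxKernel
  have : ∀ u : ℝ, 1 + u ^ 2 ≠ 0 := fun u => by positivity
  fun_prop (disch := assumption)

lemma abs_auxKernel_le {x u : ℝ} (hx : 0 < x) (hu : 0 < u) :
    ‖auxKernel x u‖ ≤ 2 * (1 + u ^ 2)⁻¹ := by
  have hxu : 0 < x * u := mul_pos hx hu
  have h1 : Real.exp (-x * u) ≤ 1 := Real.exp_le_one_iff.2 (by linarith)
  -- `v e^{-v} ≤ 1` for `v = x u` absorbs the unbounded factor `u |sin x| ≤ x u`.
  have h2 : Real.exp (-x * u) * (x * u) ≤ 1 := by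
    have h := Real.add_one_le_exp (x * u)
    have : Real.exp (-x * u) * Real.exp (x * u) = 1 := by rw [← Real.exp_add]; simp
    nlinarith [Real.exp_pos (-x * u)]
  have hs : |Real.sin x| ≤ x := by
    have := Real.abs_sin_le_abs (x := x); rwa [abs_of_pos hx] at this
  have hinv : 0 < (1 + u ^ 2)⁻¹ := by positivity
  have he := Real.exp_pos (-x * u)
  rw [auxKernel, norm_mul, norm_mul, Real.norm_eq_abs, Real.norm_eq_abs, Real.norm_eq_abs,
    abs_of_pos he, abs_of_pos hinv]
  gcongr
  calc Real.exp (-x * u) * |Real.cos x + u * Real.sin x|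
      ≤ Real.exp (-x * u) * (1 + u * x) := by
        gcongr
        refine (abs_add_le _ _).trans (add_le_add (Real.abs_cos_le_one x) ?_)
        rw [abs_mul, abs_of_pos hu]
        gcongr
    _ ≤ 2 := by nlinarith

lemma integrableOn_bound : IntegrableOn (fun u : ℝ => 2 * (1 + u ^ 2)⁻¹) (Ioi 0) :=
  (integrable_inv_one_add_sq.const_mul 2).integrableOn

lemma integrableOn_auxKernel {x : ℝ} (hx : 0 < x) : IntegrableOn (auxKernel x) (Ioi 0) := by
  refine Integrable.mono' integrableOn_bound (continuous_auxKernel x).aestronglyMeasurable ?_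
  filter_upwards [ae_restrict_mem measurableSet_Ioi] with u hu
  exact abs_auxKernel_le hx hu

lemma abs_auxInt_le {x : ℝ} (hx : 0 < x) : |auxInt x| ≤ Real.pi := by
  have h := norm_integral_le_of_norm_le (f := auxKernel x) integrableOn_bound
    (by
      filter_upwards [ae_restrict_mem measurableSet_Ioi] with u hu
      exact abs_auxKernel_le hx hu)
  rw [integral_const_mul, integral_Ioi_inv_one_add_sq, Real.arctan_zero] at h
  rw [auxInt, ← Real.norm_eq_abs]
  linarith

lemma tendsto_auxInt_atTop : Tendsto auxInt atTop (𝓝 0) := by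
  have : Tendsto auxInt atTop (𝓝 (∫ u in Ioi (0:ℝ), (0:ℝ))) := by
    refine tendsto_integral_filter_of_dominated_convergence (fun u : ℝ => 2 * (1 + u ^ 2)⁻¹)
      (Eventually.of_forall fun x => (continuous_auxKernel x).aestronglyMeasurable) ?_
      integrableOn_bound ?_
    · filter_upwards [eventually_gt_atTop 0] with x hx
      filter_upwards [ae_restrict_mem measurableSet_Ioi] with u hu
      exact abs_auxKernel_le hx hu
    · filter_upwards [ae_restrict_mem measurableSet_Ioi] with u hu
      have hu : 0 < u := hu
      have he : Tendsto (fun x : ℝ => Real.exp (-x * u) * ((1 + u) * (1 + u ^ 2)⁻¹)) atTop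
          (𝓝 (0 * ((1 + u) * (1 + u ^ 2)⁻¹))) := by
        refine Tendsto.mul_const _ (Real.tendsto_exp_atBot.comp ?_)
        exact tendsto_neg_atTop_atBot.atBot_mul_const hu
      rw [zero_mul] at he
      refine squeeze_zero_norm (fun x => ?_) he
      have hinv : 0 < (1 + u ^ 2)⁻¹ := by positivity
      have hep := Real.exp_pos (-x * u)
      rw [auxKernel, norm_mul, norm_mul, Real.norm_eq_abs, Real.norm_eq_abs, Real.norm_eq_abs,
        abs_of_pos hep, abs_of_pos hinv, mul_assoc]
      gcongr
      refine (abs_add_le _ _).trans (add_le_add (Real.abs_cos_le_one x) ?_)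
      rw [abs_mul, abs_of_pos hu]
      exact mul_le_of_le_one_right hu.le (Real.abs_sin_le_one x)
  simpa using this

lemma tendsto_auxInt_zero : Tendsto auxInt (𝓝[>] 0) (𝓝 (Real.pi / 2)) := by
  have : Tendsto auxInt (𝓝[>] 0) (𝓝 (∫ u in Ioi (0:ℝ), (1 + u ^ 2)⁻¹)) := by
    refine tendsto_integral_filter_of_dominated_convergence (fun u : ℝ => 2 * (1 + u ^ 2)⁻¹)
      (Eventually.of_forall fun x => (continuous_auxKernel x).aestronglyMeasurable) ?_
      integrableOn_bound ?_
    · filter_upwards [self_mem_nhdsWithin] with x hx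
      filter_upwards [ae_restrict_mem measurableSet_Ioi] with u hu
      exact abs_auxKernel_le hx hu
    · refine Eventually.of_forall fun u => ?_
      have hc : Continuous fun x : ℝ => auxKernel x u := by unfold auxKernel; fun_prop
      have := (hc.tendsto 0).mono_left (nhdsWithin_le_nhds (s := Ioi 0))
      simpa [auxKernel] using this
  rw [integral_Ioi_inv_one_add_sq] at this
  simpa using this

/-- Differentiation under the integral sign: `∂ₓ` of the kernel collapses to `-e^{-xu} sin x`. -/
lemma hasDerivAt_auxInt {x : ℝ} (hx : 0 < x) : HasDerivAt auxInt (-Real.sinc x) x := by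
  have hd : ∀ y u : ℝ, HasDerivAt (fun y => auxKernel y u) (-(Real.exp (-y * u) * Real.sin y)) y := by
    intro y u
    have h1 : HasDerivAt (fun y : ℝ => Real.exp (-y * u)) (Real.exp (-y * u) * (-1 * u)) y :=
      (((hasDerivAt_id y).neg).mul_const u).exp
    have h2 : HasDerivAt (fun y : ℝ => Real.cos y + u * Real.sin y)
        (-Real.sin y + u * Real.cos y) y :=
      (Real.hasDerivAt_cos y).add ((Real.hasDerivAt_sin y).const_mul u)
    have h3 := (h1.mul h2).mul_const ((1 + u ^ 2)⁻¹)
    refine h3.congr_deriv ?_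
    have : 1 + u ^ 2 ≠ 0 := by positivity
    field_simp
    ring
  have key := (hasDerivAt_integral_of_dominated_loc_of_deriv_le (μ := volume.restrict (Ioi (0:ℝ)))
    (F := auxKernel) (F' := fun y u => -(Real.exp (-y * u) * Real.sin y)) (x₀ := x)
    (bound := fun u => Real.exp (-(x / 2) * u)) (s := Ioi (x / 2))
    (Ioi_mem_nhds (by linarith))
    (Eventually.of_forall fun y => (continuous_auxKernel y).aestronglyMeasurable)
    (integrableOn_auxKernel hx)
    (Continuous.aestronglyMeasurable (by fun_prop))
    (by
      filter_upwards [ae_restrict_mem measurableSet_Ioi] with u hu y hy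
      have hu : 0 < u := hu
      have hy : x / 2 < y := hy
      rw [norm_neg, norm_mul, Real.norm_eq_abs, Real.norm_eq_abs, Real.abs_exp]
      refine (mul_le_of_le_one_right (Real.exp_pos _).le (Real.abs_sin_le_one y)).trans ?_
      rw [Real.exp_le_exp]
      nlinarith)
    (exp_neg_integrableOn_Ioi 0 (by linarith))
    (Eventually.of_forall fun u y _ => hd y u)).2
  refine key.congr_deriv ?_
  rw [integral_neg, integral_mul_const, integral_exp_mul_Ioi (by linarith),
    Real.sinc_of_ne_zero hx.ne']
  simp
  field_simp

/-- The sine integral `Si(x) = ∫₀ˣ sinc`. -/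
noncomputable def sinInt (x : ℝ) : ℝ := ∫ u in (0:ℝ)..x, Real.sinc u

lemma hasDerivAt_sinInt (x : ℝ) : HasDerivAt sinInt (Real.sinc x) x :=
  Real.continuous_sinc.integral_hasStrictDerivAt 0 x |>.hasDerivAt

lemma continuous_sinInt : Continuous sinInt :=
  continuous_iff_continuousAt.2 fun x => (hasDerivAt_sinInt x).continuousAt

lemma sinInt_eq {x : ℝ} (hx : 0 < x) : sinInt x = Real.pi / 2 - auxInt x := by
  have hder : ∀ y ∈ Ioi (0:ℝ), HasDerivAt (fun y => sinInt y + auxInt y) 0 y := fun y hy => by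
    simpa using! (hasDerivAt_sinInt y).add (hasDerivAt_auxInt hy)
  have hconst : ∀ y ∈ Ioi (0:ℝ), sinInt y + auxInt y = sinInt x + auxInt x := fun y hy =>
    isOpen_Ioi.is_const_of_deriv_eq_zero isPreconnected_Ioi
      (fun z hz => (hder z hz).differentiableAt.differentiableWithinAt)
      (fun z hz => (hder z hz).deriv) hy hx
  have h0 : Tendsto sinInt (𝓝[>] 0) (𝓝 0) := by
    have := (continuous_sinInt.tendsto 0).mono_left (nhdsWithin_le_nhds (s := Ioi 0))
    simpa [sinInt] using this
  have h1 := h0.add tendsto_auxInt_zero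
  have h2 : Tendsto (fun y => sinInt y + auxInt y) (𝓝[>] 0) (𝓝 (sinInt x + auxInt x)) :=
    tendsto_const_nhds.congr' (by
      filter_upwards [self_mem_nhdsWithin] with y hy using (hconst y hy).symm)
  have := tendsto_nhds_unique h1 h2
  linarith

/-- The Dirichlet integral. -/
lemma tendsto_sinInt : Tendsto sinInt atTop (𝓝 (Real.pi / 2)) := by
  have h : Tendsto (fun x => Real.pi / 2 - auxInt x) atTop (𝓝 (Real.pi / 2 - 0)) :=
    tendsto_const_nhds.sub tendsto_auxInt_atTop
  rw [sub_zero] at h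
  refine h.congr' ?_
  filter_upwards [eventually_gt_atTop 0] with x hx using (sinInt_eq hx).symm

lemma abs_sinInt_le {x : ℝ} (hx : 0 ≤ x) : |sinInt x| ≤ 2 * Real.pi := by
  rcases hx.eq_or_lt with rfl | hx
  · simp [sinInt, Real.pi_pos.le]
  · rw [sinInt_eq hx]
    have := abs_le.1 (abs_auxInt_le hx)
    have hp := Real.pi_pos
    rw [abs_le]
    constructor <;> linarith

lemma integral_kernel (R w : ℝ) :
    ∫ x in (0:ℝ)..R, ((x:ℂ) * Complex.exp (2 * Complex.I * (x:ℂ) ^ 2 * (w:ℂ))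
        + (x:ℂ) * Complex.exp (2 * Complex.I * (Complex.I * (x:ℂ)) ^ 2 * (w:ℂ)))
      = ((R ^ 2 * Real.sinc (2 * R ^ 2 * w) : ℝ) : ℂ) := by
  have h1 : ∀ x : ℝ, ((x:ℂ) * Complex.exp (2 * Complex.I * (x:ℂ) ^ 2 * (w:ℂ))
        + (x:ℂ) * Complex.exp (2 * Complex.I * (Complex.I * (x:ℂ)) ^ 2 * (w:ℂ)))
      = ((2 * x * Real.cos (2 * x ^ 2 * w) : ℝ) : ℂ) := by
    intro x
    push_cast
    rw [Complex.cos, mul_pow, Complex.I_sq]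
    ring_nf
  simp_rw [h1]
  rw [intervalIntegral.integral_ofReal]
  congr 1
  rcases eq_or_ne w 0 with rfl | hw
  · have h2 : ∫ x in (0:ℝ)..R, 2 * x = R ^ 2 := by
      rw [intervalIntegral.integral_const_mul, integral_id]; ring
    simpa using h2
  rw [intervalIntegral.integral_eq_sub_of_hasDerivAt (f := fun x => Real.sin (2 * x ^ 2 * w) / (2 * w))
    (fun x _ => ?_) (Continuous.intervalIntegrable (by fun_prop) _ _)]
  · rcases eq_or_ne R 0 with rfl | hR
    · simp
    · rw [Real.sinc_of_ne_zero (by positivity)]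
      simp
      field_simp
  · have h := ((((hasDerivAt_pow 2 x).const_mul 2).mul_const w).sin).div_const (2 * w)
    refine h.congr_deriv ?_
    push_cast
    field_simp

/-- Fubini turns the truncated contour integral into an integral of `f` against a sinc kernel
concentrating at `s = t`. -/
lemma contour_eq {t : ℝ} (ht : 0 < t) {f : ℝ → ℂ} (hf : ContinuousOn f (Icc (-t) t)) (R : ℝ) :
    (∫ x in (0:ℝ)..R, (x:ℂ) * fhat t f (x:ℂ))
      + (∫ y in (0:ℝ)..R, (y:ℂ) * fhat t f (Complex.I * (y:ℂ)))
    = ∫ s in (-t)..t, f s * ((R ^ 2 * Real.sinc (2 * R ^ 2 * (t - s)) : ℝ) : ℂ) := by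
  have hle : -t ≤ t := by linarith
  -- A continuous extension of `f` to the line makes every integrand jointly continuous.
  set g : ℝ → ℂ := IccExtend hle ((Icc (-t) t).domRestrict f) with hg
  have hgc : Continuous g := (continuousOn_iff_continuous_domRestrict.1 hf).Icc_extend'
  have hgf : ∀ s ∈ uIcc (-t) t, f s = g s := fun s hs => by
    rw [uIcc_of_le hle] at hs
    rw [hg, IccExtend_of_mem _ _ hs]; rfl
  have hfh : ∀ k, fhat t f k =
      ∫ s in (-t)..t, Complex.exp (2 * Complex.I * k ^ 2 * ((s:ℂ) - (t:ℂ))) * g s := fun k =>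
    intervalIntegral.integral_congr fun s hs => by simp only [hgf s hs]
  simp_rw [hfh]
  rw [← intervalIntegral.integral_add
    (Continuous.intervalIntegrable (by
      refine Complex.continuous_ofReal.mul
        (intervalIntegral.continuous_parametric_intervalIntegral_of_continuous' ?_ _ _)
      unfold Function.uncurry; fun_prop) _ _)
    (Continuous.intervalIntegrable (by
      refine Complex.continuous_ofReal.mul
        (intervalIntegral.continuous_parametric_intervalIntegral_of_continuous' ?_ _ _)
      unfold Function.uncurry; fun_prop) _ _)]
  have hcomb : ∀ x : ℝ,
      (x:ℂ) * (∫ s in (-t)..t, Complex.exp (2 * Complex.I * (x:ℂ) ^ 2 * ((s:ℂ) - (t:ℂ))) * g s)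
      + (x:ℂ) * (∫ s in (-t)..t,
          Complex.exp (2 * Complex.I * (Complex.I * (x:ℂ)) ^ 2 * ((s:ℂ) - (t:ℂ))) * g s)
      = ∫ s in (-t)..t, g s * ((x:ℂ) * Complex.exp (2 * Complex.I * (x:ℂ) ^ 2 * ((s - t : ℝ):ℂ))
        + (x:ℂ) * Complex.exp (2 * Complex.I * (Complex.I * (x:ℂ)) ^ 2 * ((s - t : ℝ):ℂ))) := by
    intro x
    rw [← intervalIntegral.integral_const_mul, ← intervalIntegral.integral_const_mul,
      ← intervalIntegral.integral_add (Continuous.intervalIntegrable (by fun_prop) _ _)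
        (Continuous.intervalIntegrable (by fun_prop) _ _)]
    refine intervalIntegral.integral_congr fun s _ => ?_
    push_cast
    ring
  simp_rw [hcomb]
  rw [intervalIntegral_intervalIntegral_swap]
  · refine intervalIntegral.integral_congr fun s hs => ?_
    rw [intervalIntegral.integral_const_mul, integral_kernel, hgf s hs,
      ← Real.sinc_neg (2 * R ^ 2 * (t - s))]
    congr 5
    ring
  · refine IntegrableOn.mono_set (t := uIcc 0 R ×ˢ uIcc (-t) t) ?_
      (prod_mono uIoc_subset_uIcc uIoc_subset_uIcc)
    refine ContinuousOn.integrableOn_compact (isCompact_uIcc.prod isCompact_uIcc)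
      (Continuous.continuousOn ?_)
    unfold Function.uncurry; fun_prop

/-- Integration by parts moves the sinc kernel onto its bounded primitive. -/
lemma sinc_integral_eq {t : ℝ} (ht : 0 < t) {f : ℝ → ℂ} (hf : ContDiffOn ℝ 1 f (Icc (-t) t))
    (R : ℝ) :
    ∫ s in (-t)..t, f s * ((R ^ 2 * Real.sinc (2 * R ^ 2 * (t - s)) : ℝ) : ℂ)
    = f (-t) * ((sinInt (2 * R ^ 2 * (2 * t)) / 2 : ℝ) : ℂ)
      + ∫ s in (-t)..t, derivWithin f (Icc (-t) t) s
          * ((sinInt (2 * R ^ 2 * (t - s)) / 2 : ℝ) : ℂ) := by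
  have hle : -t ≤ t := by linarith
  have hv : ∀ s : ℝ, HasDerivAt (fun s : ℝ => ((-(sinInt (2 * R ^ 2 * (t - s)) / 2) : ℝ) : ℂ))
      ((R ^ 2 * Real.sinc (2 * R ^ 2 * (t - s)) : ℝ) : ℂ) s := fun s => by
    have h1 : HasDerivAt (fun s : ℝ => 2 * R ^ 2 * (t - s)) (2 * R ^ 2 * (-1)) s :=
      ((hasDerivAt_id s).const_sub t).const_mul _
    have h2 := (((hasDerivAt_sinInt _).comp s h1).div_const 2).neg
    refine (h2.ofReal_comp).congr_deriv ?_
    push_cast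
    ring
  rw [intervalIntegral.integral_mul_deriv_eq_deriv_mul_of_hasDerivWithinAt
    (u' := derivWithin f (Icc (-t) t))
    (fun s hs => by
      rw [uIcc_of_le hle] at hs ⊢
      exact (hf.differentiableOn one_ne_zero s hs).hasDerivWithinAt)
    (fun s _ => (hv s).hasDerivWithinAt)]
  · rw [sub_eq_add_neg, ← intervalIntegral.integral_neg]
    congr 1
    · have h0 : sinInt 0 = 0 := by simp [sinInt]
      have : t - -t = 2 * t := by ring
      simp [h0, this]
    · refine intervalIntegral.integral_congr fun s _ => ?_
      push_cast
      ring
  · refine ContinuousOn.intervalIntegrable ?_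
    rw [uIcc_of_le hle]
    exact hf.continuousOn_derivWithin (uniqueDiffOn_Icc (by linarith)) le_rfl
  · refine Continuous.intervalIntegrable ?_ _ _
    have := Real.continuous_sinc
    fun_prop

/-- The boundary case `t' = t` of the inversion identity: for `f` continuously differentiable
on `[-t,t]`, the integral of `k f̂(k)` along the boundary of the first quadrant, taken as an
improper limit, exists and equals `(π/4) f(t)`. -/
theorem stmt_5 (t : ℝ) (ht : 0 < t) (f : ℝ → ℂ) (hf : ContDiffOn ℝ 1 f (Icc (-t) t)) :
    Tendsto
      (fun R : ℝ =>
        (∫ x in (0:ℝ)..R, (x:ℂ) * fhat t f (x:ℂ))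
          + ∫ y in (0:ℝ)..R, (y:ℂ) * fhat t f (Complex.I * (y:ℂ)))
      atTop (𝓝 (((Real.pi : ℂ) / 4) * f t)) := by
  have hle : -t ≤ t := by linarith
  have hd : ContinuousOn (derivWithin f (Icc (-t) t)) (Icc (-t) t) :=
    hf.continuousOn_derivWithin (uniqueDiffOn_Icc (by linarith)) le_rfl
  have hdi : IntervalIntegrable (derivWithin f (Icc (-t) t)) volume (-t) t :=
    ContinuousOn.intervalIntegrable (by rwa [uIcc_of_le hle])
  have hlim : ∀ a : ℝ, 0 < a →
      Tendsto (fun R : ℝ => ((sinInt (2 * R ^ 2 * a) / 2 : ℝ) : ℂ)) atTop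
        (𝓝 ((Real.pi / 2 / 2 : ℝ) : ℂ)) := fun a ha => by
    refine (Complex.continuous_ofReal.tendsto _).comp ((tendsto_sinInt.comp ?_).div_const 2)
    exact ((tendsto_pow_atTop two_ne_zero).const_mul_atTop two_pos).atTop_mul_const ha
  have hint : Tendsto (fun R : ℝ => ∫ s in (-t)..t, derivWithin f (Icc (-t) t) s
          * ((sinInt (2 * R ^ 2 * (t - s)) / 2 : ℝ) : ℂ)) atTop
      (𝓝 (∫ s in (-t)..t, derivWithin f (Icc (-t) t) s * ((Real.pi / 2 / 2 : ℝ) : ℂ))) := by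
    refine intervalIntegral.tendsto_integral_filter_of_dominated_convergence
      (fun s => ‖derivWithin f (Icc (-t) t) s‖ * Real.pi) ?_ ?_ (hdi.norm.mul_const _) ?_
    · refine Eventually.of_forall fun R => hdi.def'.aestronglyMeasurable.mul ?_
      refine Continuous.aestronglyMeasurable ?_
      have := continuous_sinInt
      fun_prop
    · refine Eventually.of_forall fun R => Eventually.of_forall fun s hs => ?_
      rw [uIoc_of_le hle] at hs
      have hnn : 0 ≤ 2 * R ^ 2 * (t - s) := mul_nonneg (by positivity) (by linarith [hs.2])
      have hb := abs_sinInt_le hnn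
      rw [norm_mul, Complex.norm_real, Real.norm_eq_abs, abs_div, abs_two]
      gcongr
      linarith
    · -- Pointwise convergence fails only at the endpoint, where the argument of `sinInt` is `0`.
      filter_upwards [Measure.ae_ne volume t] with s hst hs
      rw [uIoc_of_le hle] at hs
      exact (hlim (t - s) (sub_pos.2 (lt_of_le_of_ne hs.2 hst))).const_mul _
  have hftc : ∫ s in (-t)..t, derivWithin f (Icc (-t) t) s = f t - f (-t) := by
    refine intervalIntegral.integral_eq_sub_of_hasDerivAt_of_le hle hf.continuousOn
      (fun s hs => ?_) hdi
    exact ((hf.differentiableOn one_ne_zero s (Ioo_subset_Icc_self hs)).hasDerivWithinAt).hasDerivAt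
      (Icc_mem_nhds hs.1 hs.2)
  have htot := ((hlim (2 * t) (by linarith)).const_mul (f (-t))).add hint
  rw [intervalIntegral.integral_mul_const, hftc] at htot
  have hval : f (-t) * ((Real.pi / 2 / 2 : ℝ) : ℂ) + (f t - f (-t)) * ((Real.pi / 2 / 2 : ℝ) : ℂ)
      = (Real.pi : ℂ) / 4 * f t := by
    push_cast
    ring
  rw [hval] at htot
  refine htot.congr fun R => ?_
  rw [contour_eq ht hf.continuousOn, sinc_integral_eq ht hf]
end

section
/- Let t > 0, 0 < t′ < t, and let f : [−t, t] → ℂ be continuously differentiable. Define G(k) = 2k² ∫_{t′}^{t} e^{4ik²(τ−t′)} f(2τ − t) dτ + f(2t′ − t)/(2i) for k ∈ ℂ. Then the limit lim_{R→∞} ( ∫₀^R G(x) dx − i∫₀^R G(iy) dy ) exists and equals 0. -/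
open Set Filter Topology

/-!
Integrating by parts in `τ`, the constant `f (2t' - t) / (2i)` cancels the boundary term at `t'`, and
`2i G(k)` becomes `f(t) e^{4ik²(t-t')} - ∫ e^{4ik²(τ-t')} (d/dτ) f(2τ-t) dτ` (`transform_by_parts`).
By Fubini (`contour_transform`) everything then reduces to the contour integral of the pure
exponential `e^{4ik²s}` with `s > 0`, called `fresnelContour R s`. Cauchy's theorem moves it to the
chord from `iR` to `R`, on which the modulus is `e^{-8sR²u(1-u)}`, and this gives
`‖fresnelContour R s‖ ≤ 2 R^{-1/2} s^{-3/4}` (`norm_fresnelContour_le`). The bound tends to zero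
as `R → ∞` and is integrable in `s` near `0`, so both terms vanish in the limit.
-/

/-- The integral of `k ↦ exp (4 i k² s)` along the boundary of the first quadrant truncated at
radius `R`, from `iR` to `0` to `R`. -/
noncomputable def fresnelContour (R s : ℝ) : ℂ :=
  (∫ x in (0:ℝ)..R, Complex.exp (4 * Complex.I * (x:ℂ) ^ 2 * (s:ℂ)))
    - Complex.I * ∫ y in (0:ℝ)..R, Complex.exp (4 * Complex.I * (Complex.I * (y:ℂ)) ^ 2 * (s:ℂ))

/-- By Cauchy's theorem the contour may be replaced by the chord from `iR` to `R`. -/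
lemma fresnelContour_eq_chord (R s : ℝ) :
    fresnelContour R s = ∫ u in (0:ℝ)..1, ((R:ℂ) - Complex.I * R) *
      Complex.exp (4 * Complex.I * (Complex.I * R + u * ((R:ℂ) - Complex.I * R)) ^ 2 * (s:ℂ)) := by
  have hd : Differentiable ℂ (fun k : ℂ => Complex.exp (4 * Complex.I * k ^ 2 * (s:ℂ))) := by
    fun_prop
  obtain ⟨P, hP⟩ := hd.isExactOn_univ
  replace hP : ∀ k, HasDerivAt P (Complex.exp (4 * Complex.I * k ^ 2 * (s:ℂ))) k :=
    fun k => hP k (mem_univ k)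
  have key : ∀ (a b : ℝ) (p v : ℂ), (∫ u in a..b, v *
      Complex.exp (4 * Complex.I * (p + u * v) ^ 2 * (s:ℂ))) = P (p + b * v) - P (p + a * v) := by
    intro a b p v
    refine intervalIntegral.integral_eq_sub_of_hasDerivAt (f := fun u : ℝ => P (p + u * v)) ?_
      (by apply Continuous.intervalIntegrable; fun_prop)
    intro u _
    have h1 : HasDerivAt (fun u : ℝ => p + (u:ℂ) * v) v u := by
      simpa using ((Complex.ofRealCLM.hasDerivAt (x := u)).mul_const v).const_add p
    rw [mul_comm v]
    exact (hP (p + u * v)).comp u h1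
  have h1 := key 0 R 0 1
  have h2 := key 0 R 0 Complex.I
  have h3 := key 0 1 (Complex.I * R) ((R:ℂ) - Complex.I * R)
  rw [intervalIntegral.integral_const_mul] at h2
  simp only [one_mul, mul_one, zero_add] at h1
  simp only [zero_add, mul_comm _ Complex.I] at h2
  rw [h3, fresnelContour, h1]
  simp only [mul_comm _ Complex.I] at h2 ⊢
  rw [h2]
  push_cast
  simp

lemma norm_fresnelContour_le_integral {R : ℝ} (hR : 0 ≤ R) (s : ℝ) :
    ‖fresnelContour R s‖ ≤ 2 * R * ∫ u in (0:ℝ)..1, Real.exp (-(8 * s * R ^ 2) * (u * (1 - u))) := by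
  rw [fresnelContour_eq_chord, intervalIntegral.integral_const_mul, norm_mul]
  have h1 : ‖(R:ℂ) - Complex.I * R‖ ≤ 2 * R := by
    refine (norm_sub_le _ _).trans ?_
    simp [abs_of_nonneg hR]; linarith
  refine mul_le_mul h1 ?_ (norm_nonneg _) (by linarith)
  refine intervalIntegral.norm_integral_le_of_norm_le zero_le_one (MeasureTheory.ae_of_all _ fun u _ => ?_)
    (by apply Continuous.intervalIntegrable; fun_prop)
  rw [Complex.norm_exp]
  apply le_of_eq
  congr 1
  simp [pow_two]
  ring

/-- The exponent `3/4` interpolates between the bounds `1` and `4 / a` for the integral; any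
exponent strictly between `1/2` and `1` would serve below. -/
lemma integral_exp_chord_le {a : ℝ} (ha : 0 < a) :
    ∫ u in (0:ℝ)..1, Real.exp (-a * (u * (1 - u))) ≤ (4 / a) ^ (3 / 4 : ℝ) := by
  set M := ∫ u in (0:ℝ)..1, Real.exp (-a * (u * (1 - u))) with hM
  have hint : IntervalIntegrable (fun u : ℝ => Real.exp (-a * (u * (1 - u)))) MeasureTheory.volume 0 1 := by
    apply Continuous.intervalIntegrable; fun_prop
  have hM0 : 0 ≤ M := intervalIntegral.integral_nonneg zero_le_one fun u _ => (Real.exp_pos _).le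
  have hM1 : M ≤ 1 := by
    have := intervalIntegral.integral_mono_on zero_le_one hint
      (_root_.intervalIntegrable_const (c := (1:ℝ))) (fun u hu => by
        rw [Real.exp_le_one_iff]
        nlinarith [mul_nonneg ha.le (mul_nonneg hu.1 (sub_nonneg.2 hu.2))])
    rwa [intervalIntegral.integral_const, sub_zero, one_smul] at this
  have hMa : M ≤ 4 / a := by
    have e1 : ∫ u in (0:ℝ)..1, Real.exp (-(a / 2) * u) ≤ 2 / a := by
      have hD : ∀ u ∈ uIcc (0:ℝ) 1, HasDerivAt (fun u : ℝ => -(2 / a) * Real.exp (-(a / 2) * u))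
          (Real.exp (-(a / 2) * u)) u := by
        intro u _
        have := (((hasDerivAt_id u).const_mul (-(a / 2))).exp).const_mul (-(2 / a))
        refine this.congr_deriv ?_
        simp only [id, mul_one]
        field_simp
      rw [intervalIntegral.integral_eq_sub_of_hasDerivAt hD
        (by apply Continuous.intervalIntegrable; fun_prop)]
      have : 0 < 2 / a * Real.exp (-(a / 2) * 1) := by positivity
      simp at this ⊢; linarith
    have e2 : ∫ u in (0:ℝ)..1, Real.exp (-(a / 2) * (1 - u)) ≤ 2 / a := by
      rw [intervalIntegral.integral_comp_sub_left (fun u => Real.exp (-(a / 2) * u))]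
      simpa using e1
    have i1 : IntervalIntegrable (fun u : ℝ => Real.exp (-(a / 2) * u)) MeasureTheory.volume 0 1 := by
      apply Continuous.intervalIntegrable; fun_prop
    have i2 : IntervalIntegrable (fun u : ℝ => Real.exp (-(a / 2) * (1 - u)))
        MeasureTheory.volume 0 1 := by
      apply Continuous.intervalIntegrable; fun_prop
    have := intervalIntegral.integral_mono_on zero_le_one hint (i1.add i2) (fun u hu => by
      -- `u (1 - u)` is at least `u / 2` on the left half and `(1 - u) / 2` on the right half
      rcases le_total u (1 / 2) with h | h
      · refine le_trans (Real.exp_le_exp.2 ?_) (le_add_of_nonneg_right (Real.exp_pos _).le)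
        nlinarith [mul_nonneg (mul_nonneg ha.le hu.1) (sub_nonneg.2 h)]
      · refine le_trans (Real.exp_le_exp.2 ?_) (le_add_of_nonneg_left (Real.exp_pos _).le)
        nlinarith [mul_nonneg (mul_nonneg ha.le (sub_nonneg.2 hu.2)) (sub_nonneg.2 h)])
    rw [intervalIntegral.integral_add i1 i2] at this
    calc M ≤ 2 / a + 2 / a := by linarith
      _ = 4 / a := by ring
  calc M ≤ M ^ (3 / 4 : ℝ) := by
        simpa using Real.rpow_le_rpow_of_exponent_ge' hM0 hM1 (by norm_num : (0:ℝ) ≤ 3 / 4)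
          (by norm_num : (3 / 4 : ℝ) ≤ 1)
    _ ≤ _ := Real.rpow_le_rpow hM0 hMa (by norm_num)

/-- Decay in `R` with a singularity at `s = 0` that is still integrable. -/
lemma norm_fresnelContour_le {R s : ℝ} (hR : 0 < R) (hs : 0 < s) :
    ‖fresnelContour R s‖ ≤ 2 * R ^ (-(1 / 2) : ℝ) * s ^ (-(3 / 4) : ℝ) := by
  refine (norm_fresnelContour_le_integral hR.le s).trans ?_
  have h := integral_exp_chord_le (a := 8 * s * R ^ 2) (by positivity)
  have h2 : (4 / (8 * s * R ^ 2)) ^ (3 / 4 : ℝ) ≤ (s ^ (-1 : ℝ) * R ^ (-2 : ℝ)) ^ (3 / 4 : ℝ) := by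
    refine Real.rpow_le_rpow (by positivity) ?_ (by norm_num)
    rw [Real.rpow_neg hs.le, Real.rpow_neg hR.le, Real.rpow_one, Real.rpow_two, ← mul_inv,
      ← one_div, div_le_div_iff₀ (by positivity) (by positivity)]
    nlinarith [mul_pos hs (pow_pos hR 2)]
  rw [Real.mul_rpow (by positivity) (by positivity), ← Real.rpow_mul hs.le,
    ← Real.rpow_mul hR.le] at h2
  have h3 : R ^ (-(1 / 2) : ℝ) = R * R ^ (-2 * (3 / 4) : ℝ) := by
    conv_rhs => enter [1]; rw [← Real.rpow_one R]
    rw [← Real.rpow_add hR]; norm_num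
  rw [h3]
  have h4 := mul_le_mul_of_nonneg_left (h.trans h2) (by positivity : 0 ≤ 2 * R)
  refine h4.trans (le_of_eq ?_)
  rw [show (-1 * (3 / 4) : ℝ) = -(3 / 4) by norm_num]
  ring

/-- Integration by parts: the constant added to the transform cancels the boundary term at the
lower endpoint. -/
lemma transform_by_parts {a b : ℝ} (hab : a < b) {φ h : ℝ → ℂ} (hφ : ContinuousOn φ (Icc a b))
    (hh : Continuous h) (hd : ∀ τ ∈ Ioo a b, HasDerivAt φ (h τ) τ) (k : ℂ) :
    2 * k ^ 2 * (∫ τ in a..b, Complex.exp (4 * Complex.I * k ^ 2 * ((τ:ℂ) - (a:ℂ))) * φ τ)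
        + φ a / (2 * Complex.I)
      = (φ b * Complex.exp (4 * Complex.I * k ^ 2 * ((b - a : ℝ) : ℂ))
        - ∫ τ in a..b, h τ * Complex.exp (4 * Complex.I * k ^ 2 * ((τ - a : ℝ) : ℂ)))
          / (2 * Complex.I) := by
  have hv : ∀ τ : ℝ, HasDerivAt
      (fun τ : ℝ => Complex.exp (4 * Complex.I * k ^ 2 * ((τ - a : ℝ) : ℂ)))
      (4 * Complex.I * k ^ 2 * Complex.exp (4 * Complex.I * k ^ 2 * ((τ - a : ℝ) : ℂ))) τ := by
    intro τ
    have := ((((hasDerivAt_id τ).sub_const a).ofReal_comp).const_mul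
      (4 * Complex.I * k ^ 2)).cexp
    refine this.congr_deriv ?_
    simp only [id, Complex.ofReal_one, mul_one]
    ring
  have hp := intervalIntegral.integral_mul_deriv_eq_deriv_mul_of_hasDerivAt
    (u := φ) (u' := h) (a := a) (b := b)
    (by rwa [uIcc_of_le hab.le]) (fun τ _ => (hv τ).continuousAt.continuousWithinAt)
    (by rwa [min_eq_left hab.le, max_eq_right hab.le]) (fun τ _ => hv τ)
    (hh.intervalIntegrable _ _)
    (by apply Continuous.intervalIntegrable; fun_prop)
  have hL : (∫ τ in a..b, φ τ * (4 * Complex.I * k ^ 2 *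
      Complex.exp (4 * Complex.I * k ^ 2 * ((τ - a : ℝ) : ℂ)))) = (4 * Complex.I * k ^ 2) *
      ∫ τ in a..b, Complex.exp (4 * Complex.I * k ^ 2 * ((τ:ℂ) - (a:ℂ))) * φ τ := by
    rw [← intervalIntegral.integral_const_mul]
    congr 1; ext τ; push_cast; ring
  rw [hL, sub_self, Complex.ofReal_zero, mul_zero, Complex.exp_zero, mul_one] at hp
  rw [eq_div_iff (by simp), add_mul, div_mul_cancel₀ _ (by simp)]
  linear_combination hp

/-- Fubini's theorem turns the contour integral of a transform into a transform of
`fresnelContour`. -/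
lemma contour_transform (a b : ℝ) {h : ℝ → ℂ} (hh : Continuous h) (c : ℂ) (R : ℝ) :
    (∫ x in (0:ℝ)..R, (c * Complex.exp (4 * Complex.I * (x:ℂ) ^ 2 * ((b - a : ℝ) : ℂ))
        - ∫ τ in a..b, h τ * Complex.exp (4 * Complex.I * (x:ℂ) ^ 2 * ((τ - a : ℝ) : ℂ)))
          / (2 * Complex.I))
      - Complex.I * (∫ y in (0:ℝ)..R,
        (c * Complex.exp (4 * Complex.I * (Complex.I * (y:ℂ)) ^ 2 * ((b - a : ℝ) : ℂ))
        - ∫ τ in a..b, h τ *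
            Complex.exp (4 * Complex.I * (Complex.I * (y:ℂ)) ^ 2 * ((τ - a : ℝ) : ℂ)))
          / (2 * Complex.I))
    = (c * fresnelContour R (b - a) - ∫ τ in a..b, h τ * fresnelContour R (τ - a))
        / (2 * Complex.I) := by
  have ray : ∀ v : ℂ, (∫ x in (0:ℝ)..R,
        (c * Complex.exp (4 * Complex.I * (v * (x:ℂ)) ^ 2 * ((b - a : ℝ) : ℂ))
        - ∫ τ in a..b, h τ * Complex.exp (4 * Complex.I * (v * (x:ℂ)) ^ 2 * ((τ - a : ℝ) : ℂ)))
          / (2 * Complex.I))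
      = (c * (∫ x in (0:ℝ)..R, Complex.exp (4 * Complex.I * (v * (x:ℂ)) ^ 2 * ((b - a : ℝ) : ℂ)))
        - ∫ τ in a..b, h τ *
          ∫ x in (0:ℝ)..R, Complex.exp (4 * Complex.I * (v * (x:ℂ)) ^ 2 * ((τ - a : ℝ) : ℂ)))
          / (2 * Complex.I) := by
    intro v
    have hc : Continuous (Function.uncurry fun (x τ : ℝ) =>
        h τ * Complex.exp (4 * Complex.I * (v * (x:ℂ)) ^ 2 * ((τ - a : ℝ) : ℂ))) := by
      unfold Function.uncurry
      fun_prop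
    rw [intervalIntegral.integral_div, intervalIntegral.integral_sub
      (by apply Continuous.intervalIntegrable; fun_prop)
      ((intervalIntegral.continuous_parametric_intervalIntegral_of_continuous' hc
        a b).intervalIntegrable _ _),
      intervalIntegral.integral_const_mul,
      MeasureTheory.intervalIntegral_intervalIntegral_swap]
    · simp only [intervalIntegral.integral_const_mul]
    · exact (hc.continuousOn.integrableOn_compact
        (isCompact_uIcc.prod isCompact_uIcc)).mono_set
          (prod_mono uIoc_subset_uIcc uIoc_subset_uIcc)
  have h1 := ray 1
  simp only [one_mul] at h1
  rw [h1, ray Complex.I]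
  have hc : ∀ v : ℂ, Continuous fun τ : ℝ => h τ * ∫ x in (0:ℝ)..R,
      Complex.exp (4 * Complex.I * (v * (x:ℂ)) ^ 2 * ((τ - a : ℝ) : ℂ)) := by
    intro v
    refine hh.mul (intervalIntegral.continuous_parametric_intervalIntegral_of_continuous' ?_ _ _)
    unfold Function.uncurry
    fun_prop
  have hc1 := hc 1
  simp only [one_mul] at hc1
  have hE : (∫ τ in a..b, h τ * fresnelContour R (τ - a)) =
      (∫ τ in a..b, h τ *
          ∫ x in (0:ℝ)..R, Complex.exp (4 * Complex.I * (x:ℂ) ^ 2 * ((τ - a : ℝ) : ℂ)))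
      - Complex.I * ∫ τ in a..b, h τ * ∫ x in (0:ℝ)..R,
          Complex.exp (4 * Complex.I * (Complex.I * (x:ℂ)) ^ 2 * ((τ - a : ℝ) : ℂ)) := by
    rw [← intervalIntegral.integral_const_mul, ← intervalIntegral.integral_sub
      (hc1.intervalIntegrable _ _) (((hc Complex.I).const_mul _).intervalIntegrable _ _)]
    congr 1; ext τ; rw [fresnelContour]; ring
  rw [hE, fresnelContour]
  ring

lemma tendsto_transform_fresnelContour {a b : ℝ} (hab : a < b) {h : ℝ → ℂ} (hh : Continuous h)
    (c : ℂ) :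
    Tendsto (fun R : ℝ => (c * fresnelContour R (b - a) - ∫ τ in a..b, h τ * fresnelContour R (τ - a))
        / (2 * Complex.I)) atTop (𝓝 0) := by
  have hR : Tendsto (fun R : ℝ => R ^ (-(1 / 2) : ℝ)) atTop (𝓝 0) :=
    tendsto_rpow_neg_atTop (by norm_num)
  obtain ⟨M, hM⟩ := isCompact_Icc.exists_bound_of_continuousOn (hh.continuousOn (s := Icc a b))
  have hpow : IntervalIntegrable (fun τ : ℝ => (τ - a) ^ (-(3 / 4) : ℝ)) MeasureTheory.volume a b := by
    have := (intervalIntegral.intervalIntegrable_rpow' (a := 0) (b := b - a)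
      (r := (-(3 / 4) : ℝ)) (by norm_num)).comp_sub_right a
    simpa using this
  have h1 : Tendsto (fun R : ℝ => c * fresnelContour R (b - a)) atTop (𝓝 0) := by
    refine squeeze_zero_norm' (a := fun R : ℝ =>
      ‖c‖ * (2 * R ^ (-(1 / 2) : ℝ) * (b - a) ^ (-(3 / 4) : ℝ))) ?_ ?_
    · filter_upwards [eventually_gt_atTop 0] with R hR0
      rw [norm_mul]
      gcongr
      exact norm_fresnelContour_le hR0 (sub_pos.2 hab)
    · simpa using ((hR.const_mul 2).mul_const ((b - a) ^ (-(3 / 4) : ℝ))).const_mul ‖c‖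
  have h2 : Tendsto (fun R : ℝ => ∫ τ in a..b, h τ * fresnelContour R (τ - a)) atTop (𝓝 0) := by
    refine squeeze_zero_norm' (a := fun R : ℝ =>
      R ^ (-(1 / 2) : ℝ) * (2 * M * ∫ τ in a..b, (τ - a) ^ (-(3 / 4) : ℝ))) ?_ ?_
    · filter_upwards [eventually_gt_atTop 0] with R hR0
      rw [← mul_assoc, ← intervalIntegral.integral_const_mul]
      refine intervalIntegral.norm_integral_le_of_norm_le hab.le
        (MeasureTheory.ae_of_all _ fun τ hτ => ?_) (hpow.const_mul _)
      rw [norm_mul]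
      have e1 := hM τ (Ioc_subset_Icc_self hτ)
      have e2 := norm_fresnelContour_le hR0 (sub_pos.2 hτ.1)
      refine (mul_le_mul e1 e2 (norm_nonneg _) ((norm_nonneg _).trans e1)).trans (le_of_eq ?_)
      ring
    · simpa using hR.mul_const (2 * M * ∫ τ in a..b, (τ - a) ^ (-(3 / 4) : ℝ))
  simpa using (h1.sub h2).div_const (2 * Complex.I)

/-- For `0 < t' < t` and `f` continuously differentiable on `[-t,t]`, the function
`G(k) = 2k² ∫_{t'}^{t} e^{4ik²(τ-t')} f(2τ-t) dτ + f(2t'-t)/(2i)` integrates to zero along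
the boundary of the first quadrant, taken as an improper limit. -/
theorem stmt_6 (t t' : ℝ) (ht : 0 < t) (ht'0 : 0 < t') (ht't : t' < t)
    (f : ℝ → ℂ) (hf : ContDiffOn ℝ 1 f (Icc (-t) t)) :
    Tendsto
      (fun R : ℝ =>
        (∫ x in (0:ℝ)..R,
            (2 * (x:ℂ) ^ 2 *
                (∫ τ in t'..t,
                  Complex.exp (4 * Complex.I * (x:ℂ) ^ 2 * ((τ:ℂ) - (t':ℂ))) * f (2 * τ - t))
              + f (2 * t' - t) / (2 * Complex.I)))
          - Complex.I *
            ∫ y in (0:ℝ)..R,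
              (2 * (Complex.I * (y:ℂ)) ^ 2 *
                  (∫ τ in t'..t,
                    Complex.exp (4 * Complex.I * (Complex.I * (y:ℂ)) ^ 2 * ((τ:ℂ) - (t':ℂ))) *
                      f (2 * τ - t))
                + f (2 * t' - t) / (2 * Complex.I)))
      atTop (𝓝 0) := by

  have htt : -t < t := by linarith
  -- `g` extends `f'` continuously to the whole line, by constants outside `[-t, t]`.
  have hg0 : ContinuousOn (derivWithin f (Icc (-t) t)) (Icc (-t) t) :=
    hf.continuousOn_derivWithin (uniqueDiffOn_Icc htt) le_rfl
  set g : ℝ → ℂ := IccExtend htt.le ((Icc (-t) t).domRestrict (derivWithin f (Icc (-t) t))) with hgdef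
  have hg : Continuous g := hg0.domRestrict.Icc_extend'
  have hfg : ∀ x ∈ Ioo (-t) t, HasDerivAt f (g x) x := by
    intro x hx
    have hx' := Ioo_subset_Icc_self hx
    have := ((hf.differentiableOn one_ne_zero) x hx').hasDerivWithinAt.hasDerivAt
      (Icc_mem_nhds hx.1 hx.2)
    rwa [hgdef, IccExtend_of_mem _ _ hx']
  have hφ : ContinuousOn (fun τ => f (2 * τ - t)) (Icc t' t) :=
    hf.continuousOn.comp (by fun_prop) fun τ hτ => ⟨by linarith [hτ.1], by linarith [hτ.2]⟩
  have hh : Continuous fun τ => 2 * g (2 * τ - t) := by fun_prop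
  have hd : ∀ τ ∈ Ioo t' t, HasDerivAt (fun τ => f (2 * τ - t)) (2 * g (2 * τ - t)) τ := by
    intro τ hτ
    have h1 : HasDerivAt (fun τ : ℝ => 2 * τ - t) 2 τ := by
      simpa using ((hasDerivAt_id τ).const_mul 2).sub_const t
    have := (hfg (2 * τ - t) ⟨by linarith [hτ.1], by linarith [hτ.2]⟩).scomp τ h1
    refine this.congr_deriv ?_
    rw [Complex.real_smul, Complex.ofReal_ofNat]
  simp_rw [transform_by_parts ht't hφ hh hd, contour_transform t' t hh]
  exact tendsto_transform_fresnelContour ht't hh _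
end

section
/- Fix k ∈ ℂ, λ ∈ {1, −1}, L > 0, T > 0 and let q : [0,L] × [0,T] → ℂ be twice continuously differentiable. Define Q = [[0, q],[λ·conj(q), 0]] and Q̃ = 2kQ − i(Q_x + λ|q|² I)σ₃. Suppose μ : [0,L] × [0,T] → M₂(ℂ) is continuously differentiable, μ(x,t) is invertible for all (x,t), and μ satisfies both Lax equations μ_x = −ik[σ₃, μ] + Qμ and μ_t = −2ik²[σ₃, μ] + Q̃μ. Define R(x,t) = μ(x,t) e^{ik(L−x)σ₃} μ(L,t)^{−1} e^{−ik(L−x)σ₃}. Then R(L,t) = I for all t, and R satisfies ∂R/∂t (x,t) = −2ik²[σ₃, R(x,t)] + Q̃(x,t) R(x,t) − R(x,t) · e^{ik(L−x)σ₃} Q̃(L,t) e^{−ik(L−x)σ₃} for all (x,t). -/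
/-!
Differentiate `R = μ(x,t) E μ(L,t)⁻¹ E⁻¹` with `E = e^{ik(L-x)σ₃}` constant in `t`, using the product
rule and `(μ⁻¹)_t = -μ⁻¹ μ_t μ⁻¹`. After inserting the `t`-equation at `x` and at `L`, the two terms
containing `μ(x,t) σ₃ E μ(L,t)⁻¹ E⁻¹` cancel because `σ₃` commutes with `E`, and what is left is the
claimed right-hand side. At `x = L` one has `E = 1`, so `R = 1`.

The norm on matrices in force is the entrywise sup norm, which is not submultiplicative, so the
product and inverse rules for matrix-valued functions are derived entry by entry.
-/

open Set

attribute [local instance] Matrix.normedAddCommGroup Matrix.normedSpace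

/-- The Pauli matrix `σ₃ = diag(1, -1)`. -/
noncomputable def sigma3 : Matrix (Fin 2) (Fin 2) ℂ := !![1, 0; 0, -1]

/-- `e^{z σ₃} = diag(e^z, e^{-z})`. -/
noncomputable def expSigma3 (z : ℂ) : Matrix (Fin 2) (Fin 2) ℂ :=
  !![Complex.exp z, 0; 0, Complex.exp (-z)]

/-- The matrix `Q = [[0, z], [λ conj(z), 0]]`. -/
noncomputable def Qm (lam z : ℂ) : Matrix (Fin 2) (Fin 2) ℂ :=
  !![0, z; lam * (starRingEnd ℂ) z, 0]

/-- `Q̃ = 2kQ - i(Q_x + λ|q|² I)σ₃`, built from the values `q` and `q_x`. -/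
noncomputable def Qtilde (lam k qv qxv : ℂ) : Matrix (Fin 2) (Fin 2) ℂ :=
  (2 * k) • Qm lam qv -
    Complex.I •
      ((Qm lam qxv + (lam * (qv * (starRingEnd ℂ) qv)) • (1 : Matrix (Fin 2) (Fin 2) ℂ)) * sigma3)

theorem hasDerivWithinAt_matrix_iff {f : ℝ → Matrix (Fin 2) (Fin 2) ℂ}
    {f' : Matrix (Fin 2) (Fin 2) ℂ} {s : Set ℝ} {t : ℝ} :
    HasDerivWithinAt f f' s t ↔
      ∀ i j, HasDerivWithinAt (fun u => f u i j) (f' i j) s t := by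
  refine (hasDerivWithinAt_pi (φ := f) (φ' := f')).trans (forall_congr' fun i => ?_)
  exact hasDerivWithinAt_pi (φ := fun u => f u i) (φ' := f' i)

theorem hasDerivWithinAt_matrix_mul {f g : ℝ → Matrix (Fin 2) (Fin 2) ℂ}
    {f' g' : Matrix (Fin 2) (Fin 2) ℂ} {s : Set ℝ} {t : ℝ}
    (hf : HasDerivWithinAt f f' s t) (hg : HasDerivWithinAt g g' s t) :
    HasDerivWithinAt (fun u => f u * g u) (f' * g t + f t * g') s t := by
  rw [hasDerivWithinAt_matrix_iff] at *
  intro i j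
  simp only [Matrix.mul_apply, Matrix.add_apply, Fin.sum_univ_two]
  refine (((hf i 0).mul (hg 0 j)).add ((hf i 1).mul (hg 1 j))).congr_deriv ?_
  ring

/-- `(f⁻¹)' = -f⁻¹ f' f⁻¹`, read off from the adjugate formula for the inverse. -/
theorem hasDerivWithinAt_matrix_inv {f : ℝ → Matrix (Fin 2) (Fin 2) ℂ}
    {f' : Matrix (Fin 2) (Fin 2) ℂ} {s : Set ℝ} {t : ℝ}
    (hf : HasDerivWithinAt f f' s t) (hu : IsUnit (f t)) :
    HasDerivWithinAt (fun u => (f u)⁻¹) (-((f t)⁻¹ * f' * (f t)⁻¹)) s t := by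
  have hd : f t 0 0 * f t 1 1 - f t 0 1 * f t 1 0 ≠ 0 := by
    rw [← Matrix.det_fin_two]
    exact ((Matrix.isUnit_iff_isUnit_det _).1 hu).ne_zero
  rw [hasDerivWithinAt_matrix_iff] at *
  have hdet := (((hf 0 0).mul (hf 1 1)).sub ((hf 0 1).mul (hf 1 0))).inv hd
  intro i j
  fin_cases i <;> fin_cases j <;>
    simp only [Matrix.inv_def, Ring.inverse_eq_inv', Matrix.det_fin_two, Matrix.adjugate_fin_two,
      Matrix.smul_apply, Matrix.neg_apply, Matrix.mul_apply, Fin.sum_univ_two, smul_eq_mul,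
      Matrix.of_apply, Matrix.cons_val', Matrix.cons_val_zero, Matrix.cons_val_one,
      Matrix.cons_val_fin_one, Fin.zero_eta, Fin.mk_one]
  · refine (hdet.mul (hf 1 1)).congr_deriv ?_
    simp only [Pi.inv_apply, Pi.sub_apply, Pi.mul_apply]
    field_simp
    ring
  · refine (hdet.mul (hf 0 1).neg).congr_deriv ?_
    simp only [Pi.inv_apply, Pi.sub_apply, Pi.mul_apply, Pi.neg_apply]
    field_simp
    ring
  · refine (hdet.mul (hf 1 0).neg).congr_deriv ?_
    simp only [Pi.inv_apply, Pi.sub_apply, Pi.mul_apply, Pi.neg_apply]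
    field_simp
    ring
  · refine (hdet.mul (hf 0 0)).congr_deriv ?_
    simp only [Pi.inv_apply, Pi.sub_apply, Pi.mul_apply]
    field_simp
    ring

theorem expSigma3_zero : expSigma3 0 = 1 := by
  simp [expSigma3, Matrix.one_fin_two]

theorem expSigma3_neg_mul (z : ℂ) : expSigma3 (-z) * expSigma3 z = 1 := by
  simp [expSigma3, Matrix.one_fin_two, ← Complex.exp_add]

theorem sigma3_mul_expSigma3 (z : ℂ) : sigma3 * expSigma3 z = expSigma3 z * sigma3 := by
  simp [expSigma3, sigma3]

/-- The algebraic identity behind the evolution equation: `M = μ(x,t)`, `A = μ(L,t)`, `B = A⁻¹`,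
`E = e^{ik(L-x)σ₃}`, `F = E⁻¹`, and `P`, `P'` are `Q̃` at `x` and at `L`. -/
theorem laxRatio_identity (c : ℂ) (S M A B E F P P' : Matrix (Fin 2) (Fin 2) ℂ)
    (hAB : A * B = 1) (hBA : B * A = 1) (hFE : F * E = 1)
    (hSE : S * E = E * S) (hSF : S * F = F * S) :
    (c • (S * M - M * S) + P * M) * E * B * F
        + M * E * (-(B * (c • (S * A - A * S) + P' * A) * B)) * F =
      c • (S * (M * E * B * F) - M * E * B * F * S) + P * (M * E * B * F)
        - M * E * B * F * (E * P' * F) := by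
  have h₁ : M * S * E * B * F = M * E * S * B * F := by
    rw [mul_assoc M S E, hSE, ← mul_assoc]
  have h₂ : M * E * B * F * S = M * E * B * S * F := by
    rw [mul_assoc _ F S, ← hSF, ← mul_assoc]
  have h₃ : M * E * B * F * (E * P' * F) = M * E * B * P' * F := by
    calc _ = M * E * B * (F * E) * P' * F := by simp only [mul_assoc]
      _ = _ := by rw [hFE, mul_one]
  have h₄ : B * (c • (S * A - A * S) + P' * A) * B = c • (B * S - S * B) + B * P' := by
    calc _ = c • (B * S * (A * B) - (B * A) * S * B) + B * P' * (A * B) := by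
          simp only [mul_add, add_mul, mul_sub, sub_mul, smul_mul_assoc, mul_smul_comm, mul_assoc]
      _ = _ := by rw [hAB, hBA, mul_one, one_mul, mul_one]
  rw [h₃, h₂, h₄]
  simp only [mul_add, add_mul, mul_sub, sub_mul, smul_mul_assoc, mul_smul_comm, smul_sub, mul_neg,
    neg_mul, ← mul_assoc, h₁]
  abel

/-- If `μ` solves both Lax equations `μ_x = -ik[σ₃,μ] + Qμ`, `μ_t = -2ik²[σ₃,μ] + Q̃μ` and is
invertible, then `R(x,t) = μ(x,t) e^{ik(L-x)σ₃} μ(L,t)⁻¹ e^{-ik(L-x)σ₃}` satisfies `R(L,t) = I`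
and `R_t = -2ik²[σ₃,R] + Q̃(x,t)R - R e^{ik(L-x)σ₃} Q̃(L,t) e^{-ik(L-x)σ₃}`. -/
theorem stmt_8 (k lam : ℂ) (hlam : lam = 1 ∨ lam = -1) (L T : ℝ) (hL : 0 < L) (hT : 0 < T)
    (q qx : ℝ → ℝ → ℂ)
    (hq : ContDiffOn ℝ 2 (fun p : ℝ × ℝ => q p.1 p.2) (Icc 0 L ×ˢ Icc 0 T))
    (hqx : ∀ x ∈ Icc (0:ℝ) L, ∀ t ∈ Icc (0:ℝ) T,
      HasDerivWithinAt (fun x' => q x' t) (qx x t) (Icc 0 L) x)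
    (μ : ℝ → ℝ → Matrix (Fin 2) (Fin 2) ℂ)
    (hμcont : ContinuousOn (fun p : ℝ × ℝ => μ p.1 p.2) (Icc 0 L ×ˢ Icc 0 T))
    (hμinv : ∀ x ∈ Icc (0:ℝ) L, ∀ t ∈ Icc (0:ℝ) T, IsUnit (μ x t))
    (hμx : ∀ x ∈ Icc (0:ℝ) L, ∀ t ∈ Icc (0:ℝ) T,
      HasDerivWithinAt (fun x' => μ x' t)
        ((-(Complex.I * k)) • (sigma3 * μ x t - μ x t * sigma3) + Qm lam (q x t) * μ x t)
        (Icc 0 L) x)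
    (hμt : ∀ x ∈ Icc (0:ℝ) L, ∀ t ∈ Icc (0:ℝ) T,
      HasDerivWithinAt (fun t' => μ x t')
        ((-(2 * Complex.I * k ^ 2)) • (sigma3 * μ x t - μ x t * sigma3) +
          Qtilde lam k (q x t) (qx x t) * μ x t)
        (Icc 0 T) t) :
    (∀ t ∈ Icc (0:ℝ) T,
        μ L t * expSigma3 (Complex.I * k * ((L:ℂ) - (L:ℂ))) * (μ L t)⁻¹ *
          expSigma3 (-(Complex.I * k * ((L:ℂ) - (L:ℂ)))) = 1) ∧
      (∀ x ∈ Icc (0:ℝ) L, ∀ t ∈ Icc (0:ℝ) T,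
        HasDerivWithinAt
          (fun t' =>
            μ x t' * expSigma3 (Complex.I * k * ((L:ℂ) - (x:ℂ))) * (μ L t')⁻¹ *
              expSigma3 (-(Complex.I * k * ((L:ℂ) - (x:ℂ)))))
          ((-(2 * Complex.I * k ^ 2)) •
              (sigma3 *
                  (μ x t * expSigma3 (Complex.I * k * ((L:ℂ) - (x:ℂ))) * (μ L t)⁻¹ *
                    expSigma3 (-(Complex.I * k * ((L:ℂ) - (x:ℂ))))) -
                (μ x t * expSigma3 (Complex.I * k * ((L:ℂ) - (x:ℂ))) * (μ L t)⁻¹ *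
                    expSigma3 (-(Complex.I * k * ((L:ℂ) - (x:ℂ))))) * sigma3) +
            Qtilde lam k (q x t) (qx x t) *
              (μ x t * expSigma3 (Complex.I * k * ((L:ℂ) - (x:ℂ))) * (μ L t)⁻¹ *
                expSigma3 (-(Complex.I * k * ((L:ℂ) - (x:ℂ))))) -
            (μ x t * expSigma3 (Complex.I * k * ((L:ℂ) - (x:ℂ))) * (μ L t)⁻¹ *
                expSigma3 (-(Complex.I * k * ((L:ℂ) - (x:ℂ))))) *
              (expSigma3 (Complex.I * k * ((L:ℂ) - (x:ℂ))) * Qtilde lam k (q L t) (qx L t) *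
                expSigma3 (-(Complex.I * k * ((L:ℂ) - (x:ℂ))))))
          (Icc 0 T) t) := by
  refine ⟨fun t ht => ?_, fun x hx t ht => ?_⟩
  · have hA := (Matrix.isUnit_iff_isUnit_det _).1 (hμinv L ⟨hL.le, le_rfl⟩ t ht)
    simp [expSigma3_zero, Matrix.mul_nonsing_inv _ hA]
  · have hLm : L ∈ Icc (0:ℝ) L := ⟨hL.le, le_rfl⟩
    have hu := hμinv L hLm t ht
    have hA := (Matrix.isUnit_iff_isUnit_det _).1 hu
    generalize Complex.I * k * ((L:ℂ) - (x:ℂ)) = z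
    have hconst (C : Matrix (Fin 2) (Fin 2) ℂ) :
        HasDerivWithinAt (fun _ : ℝ => C) 0 (Icc 0 T) t := hasDerivWithinAt_const _ _ _
    have hR := hasDerivWithinAt_matrix_mul
      (hasDerivWithinAt_matrix_mul
        (hasDerivWithinAt_matrix_mul (hμt x hx t ht) (hconst (expSigma3 z)))
        (hasDerivWithinAt_matrix_inv (hμt L hLm t ht) hu))
      (hconst (expSigma3 (-z)))
    refine hR.congr_deriv ?_
    rw [← laxRatio_identity _ sigma3 (μ x t) (μ L t) (μ L t)⁻¹ (expSigma3 z) (expSigma3 (-z)) _ _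
      (Matrix.mul_nonsing_inv _ hA) (Matrix.nonsing_inv_mul _ hA) (expSigma3_neg_mul z)
      (sigma3_mul_expSigma3 z) (sigma3_mul_expSigma3 (-z))]
    simp only [mul_zero, add_zero]
    rw [add_mul]
end

section
/- Fix λ ∈ {1, −1}, k ∈ ℂ, a real interval [a,b], a point x₀ ∈ [a,b], and a continuous function q : [a,b] → ℂ, and set Q = [[0, q],[λ·conj(q), 0]]. For each k ∈ ℂ let M(·, k) : [a,b] → M₂(ℂ) be a continuously differentiable solution of M′(x,k) = −ik[σ₃, M(x,k)] + Q(x)M(x,k) with M(x₀,k) = I, defined for all k. Then for all x ∈ [a,b] and all k ∈ ℂ the entries of M satisfy the symmetries M₁₁(x,k) = conj(M₂₂(x, conj(k))) and M₂₁(x,k) = λ · conj(M₁₂(x, conj(k))). -/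
/-!
The first column `(M₁₁, M₂₁)(·, k)` solves the linear system
`u' = q v`, `v' = 2ik v + λ conj(q) u`. Conjugating the second column of the equation at `conj k`
and using that `λ` is real, the pair `(conj M₂₂, λ conj M₁₂)(·, conj k)` solves the
same system. Both equal `(1, 0)` at `x₀`, so they agree on `[a, b]` by uniqueness for linear
systems with bounded coefficients (`linear_system_unique`).
-/

open Set

attribute [local instance] Matrix.normedAddCommGroup Matrix.normedSpace

/-- Uniqueness on `[a, b]` for the system `u' = α v`, `v' = c v + β u` with bounded `α`, `β`.
Mathlib's one-sided uniqueness theorems are applied on `[a, x₀]` and on `[x₀, b]`, so that `x₀`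
may be an endpoint. -/
theorem linear_system_unique {a b x₀ : ℝ} (hx₀ : x₀ ∈ Icc a b) {α β : ℝ → ℂ} {c : ℂ} {C : ℝ}
    (hα : ∀ x ∈ Icc a b, ‖α x‖ ≤ C) (hβ : ∀ x ∈ Icc a b, ‖β x‖ ≤ C) {f g : ℝ → ℂ × ℂ}
    (hf : ∀ x ∈ Icc a b,
      HasDerivWithinAt f (α x * (f x).2, c * (f x).2 + β x * (f x).1) (Icc a b) x)
    (hg : ∀ x ∈ Icc a b,
      HasDerivWithinAt g (α x * (g x).2, c * (g x).2 + β x * (g x).1) (Icc a b) x)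
    (h0 : f x₀ = g x₀) : EqOn f g (Icc a b) := by
  let v : ℝ → ℂ × ℂ → ℂ × ℂ := fun x p => (α x * p.2, c * p.2 + β x * p.1)
  have hC : 0 ≤ C := (norm_nonneg _).trans (hα x₀ hx₀)
  have hv : ∀ x ∈ Icc a b,
      LipschitzOnWith (⟨‖c‖ + C, by positivity⟩ : NNReal) (v x) univ := by
    intro x hx
    refine LipschitzOnWith.of_dist_le_mul fun p _ r _ => ?_
    have e : v x p - v x r
        = (α x * (p - r).2, c * (p - r).2 + β x * (p - r).1) := by
      simp only [v, Prod.mk_sub_mk, Prod.fst_sub, Prod.snd_sub]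
      ext <;> ring
    rw [dist_eq_norm, dist_eq_norm, e]
    have h1 := norm_fst_le (p - r)
    have h2 := norm_snd_le (p - r)
    have hc := norm_nonneg c
    change _ ≤ (‖c‖ + C) * ‖p - r‖
    refine max_le ?_ ?_
    · calc ‖α x * (p - r).2‖ = ‖α x‖ * ‖(p - r).2‖ := norm_mul _ _
        _ ≤ C * ‖p - r‖ := mul_le_mul (hα x hx) h2 (norm_nonneg _) hC
        _ ≤ (‖c‖ + C) * ‖p - r‖ := by gcongr; linarith
    · calc ‖c * (p - r).2 + β x * (p - r).1‖
          ≤ ‖c‖ * ‖(p - r).2‖ + ‖β x‖ * ‖(p - r).1‖ := by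
            simpa only [norm_mul] using norm_add_le (c * (p - r).2) (β x * (p - r).1)
        _ ≤ ‖c‖ * ‖p - r‖ + C * ‖p - r‖ :=
            add_le_add (mul_le_mul_of_nonneg_left h2 hc)
              (mul_le_mul (hβ x hx) h1 (norm_nonneg _) hC)
        _ = (‖c‖ + C) * ‖p - r‖ := by ring
  have hfc : ContinuousOn f (Icc a b) := fun x hx => (hf x hx).continuousWithinAt
  have hgc : ContinuousOn g (Icc a b) := fun x hx => (hg x hx).continuousWithinAt
  have hl : Icc a x₀ ⊆ Icc a b := Icc_subset_Icc_right hx₀.2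
  have hr : Icc x₀ b ⊆ Icc a b := Icc_subset_Icc_left hx₀.1
  rw [← Icc_union_Icc_eq_Icc hx₀.1 hx₀.2]
  refine EqOn.union ?_ ?_
  · have hI : ∀ t ∈ Ioc a x₀, Icc a b ∈ nhdsWithin t (Iic t) := fun t ht =>
      Icc_mem_nhdsLE_of_mem ⟨ht.1, ht.2.trans hx₀.2⟩
    exact ODE_solution_unique_of_mem_Icc_left (v := v) (s := fun _ => univ)
      (fun t ht => hv t (hl (Ioc_subset_Icc_self ht)))
      (hfc.mono hl)
      (fun t ht => (hf t (hl (Ioc_subset_Icc_self ht))).mono_of_mem_nhdsWithin (hI t ht))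
      (fun _ _ => trivial) (hgc.mono hl)
      (fun t ht => (hg t (hl (Ioc_subset_Icc_self ht))).mono_of_mem_nhdsWithin (hI t ht))
      (fun _ _ => trivial) h0
  · have hI : ∀ t ∈ Ico x₀ b, Icc a b ∈ nhdsWithin t (Ici t) := fun t ht =>
      Icc_mem_nhdsGE_of_mem ⟨hx₀.1.trans ht.1, ht.2⟩
    exact ODE_solution_unique_of_mem_Icc_right (v := v) (s := fun _ => univ)
      (fun t ht => hv t (hr (Ico_subset_Icc_self ht)))
      (hfc.mono hr)
      (fun t ht => (hf t (hr (Ico_subset_Icc_self ht))).mono_of_mem_nhdsWithin (hI t ht))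
      (fun _ _ => trivial) (hgc.mono hr)
      (fun t ht => (hg t (hr (Ico_subset_Icc_self ht))).mono_of_mem_nhdsWithin (hI t ht))
      (fun _ _ => trivial) h0

/-- Symmetries of the fundamental solution of the AKNS `x`-problem:
`M₁₁(x,k) = conj(M₂₂(x, conj k))` and `M₂₁(x,k) = λ conj(M₁₂(x, conj k))`. -/
theorem stmt_9 (lam : ℂ) (hlam : lam = 1 ∨ lam = -1) (a b x₀ : ℝ) (hab : a ≤ b)
    (hx₀ : x₀ ∈ Icc a b) (q : ℝ → ℂ) (hq : ContinuousOn q (Icc a b))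
    (M : ℝ → ℂ → Matrix (Fin 2) (Fin 2) ℂ)
    (hM : ∀ k : ℂ, ∀ x ∈ Icc a b,
      HasDerivWithinAt (fun x' => M x' k)
        ((-(Complex.I * k)) • (sigma3 * M x k - M x k * sigma3) + Qm lam (q x) * M x k)
        (Icc a b) x)
    (hM0 : ∀ k : ℂ, M x₀ k = 1) :
    ∀ x ∈ Icc a b, ∀ k : ℂ,
      M x k 0 0 = (starRingEnd ℂ) (M x ((starRingEnd ℂ) k) 1 1) ∧
      M x k 1 0 = lam * (starRingEnd ℂ) (M x ((starRingEnd ℂ) k) 0 1) := by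
  intro x hx k
  obtain ⟨C, hC⟩ := isCompact_Icc.exists_bound_of_continuousOn hq
  have hlam_norm : ‖lam‖ = 1 := by rcases hlam with rfl | rfl <;> simp
  have hlam_conj : (starRingEnd ℂ) lam = lam := by rcases hlam with rfl | rfl <;> simp
  have entry : ∀ (κ : ℂ) (i j : Fin 2), ∀ y ∈ Icc a b,
      HasDerivWithinAt (fun y' => M y' κ i j)
        (((-(Complex.I * κ)) • (sigma3 * M y κ - M y κ * sigma3) + Qm lam (q y) * M y κ) i j)
        (Icc a b) y := fun κ i j y hy =>
    hasDerivWithinAt_pi.1 (hasDerivWithinAt_pi.1 (hM κ y hy) i) j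
  have key := linear_system_unique hx₀ (α := q) (β := fun y => lam * (starRingEnd ℂ) (q y))
    (c := 2 * Complex.I * k) (C := C)
    (f := fun y => (M y k 0 0, M y k 1 0))
    (g := fun y => ((starRingEnd ℂ) (M y ((starRingEnd ℂ) k) 1 1),
      lam * (starRingEnd ℂ) (M y ((starRingEnd ℂ) k) 0 1)))
    hC (fun y hy => by simpa [hlam_norm] using hC y hy) ?_ ?_ (by simp [hM0]) hx
  · exact Prod.ext_iff.1 key
  · intro y hy
    convert (entry k 0 0 y hy).prodMk (entry k 1 0 y hy) using 2
    · simp [sigma3, Qm, Matrix.mul_apply, Matrix.vecMul, dotProduct]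
    · simp [sigma3, Qm, Matrix.mul_apply, Matrix.vecMul, dotProduct]
      ring
  · intro y hy
    have h := (entry ((starRingEnd ℂ) k) 1 1 y hy).star.prodMk
      ((entry ((starRingEnd ℂ) k) 0 1 y hy).star.const_mul lam)
    refine h.congr_deriv (Prod.ext ?_ ?_)
    · simp [sigma3, Qm, Matrix.mul_apply, Matrix.vecMul, dotProduct, hlam_conj]
      ring
    · simp [sigma3, Qm, Matrix.mul_apply, Matrix.vecMul, dotProduct]
      ring
end
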